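/- arXiv:2508.12805 — 3 statements merged into one kernel-verified Lean document; each statement's English description precedes it below -/
import Mathlib

section
/- K^nom has the finite bisimilar model property: for all ML^nom-formulas φ1, φ2 and σ = sig(φ1) ∩ sig(φ2), if there exist ML^nom-models M1, M2 and worlds w1, w2 such that M1,w1 ⊨ φ1, M2,w2 ⊨ φ2, and M1,w1 ∼_σ M2,w2, then there exist FINITE ML^nom-models M1', M2' and worlds w1', w2' such that M1',w1' ⊨ φ1, M2',w2' ⊨ φ2, and M1',w1' ∼_σ M2',w2'. -/
/-- Formulas of modal logic with nominals, ML^nom: propositional variables and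
nominals (both indexed by `ℕ`) combined with `⊤`, `∧`, `¬` and `◇`. -/
inductive MLn : Type
  | top : MLn
  | var : ℕ → MLn
  | nom : ℕ → MLn
  | and : MLn → MLn → MLn
  | not : MLn → MLn
  | dia : MLn → MLn

/-- `φ → ψ` as an abbreviation. -/
def MLn.impl (φ ψ : MLn) : MLn := .not (.and φ (.not ψ))

/-- The propositional variables occurring in a formula. -/
def MLn.sigP : MLn → Set ℕ
  | .top => ∅
  | .var p => {p}
  | .nom _ => ∅
  | .and φ ψ => φ.sigP ∪ ψ.sigP
  | .not φ => φ.sigP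
  | .dia φ => φ.sigP

/-- The nominals occurring in a formula. -/
def MLn.sigN : MLn → Set ℕ
  | .top => ∅
  | .var _ => ∅
  | .nom i => {i}
  | .and φ ψ => φ.sigN ∪ ψ.sigN
  | .not φ => φ.sigN
  | .dia φ => φ.sigN

/-- An ML^nom-model: a Kripke model in which, additionally, every nominal denotes
a single world (so that its valuation is a singleton subset). -/
structure KripkeN : Type 1 where
  W : Type
  nonempty : Nonempty W
  R : W → W → Prop
  V : ℕ → Set W
  N : ℕ → W

/-- Truth of an ML^nom-formula at a world. -/
def MLn.sat (M : KripkeN) : M.W → MLn → Prop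
  | _, .top => True
  | w, .var p => w ∈ M.V p
  | w, .nom i => M.N i = w
  | w, .and φ ψ => MLn.sat M w φ ∧ MLn.sat M w ψ
  | w, .not φ => ¬ MLn.sat M w φ
  | w, .dia φ => ∃ v, M.R w v ∧ MLn.sat M v φ

/-- A `σ`-bisimulation between ML^nom-models, where the signature `σ` is given by a
set `σP` of propositional variables together with a set `σN` of nominals. -/
def IsBisimulationN (σP σN : Set ℕ) (M₁ M₂ : KripkeN) (β : M₁.W → M₂.W → Prop) : Prop :=
  ∀ u₁ u₂, β u₁ u₂ →
    (∀ p ∈ σP, (u₁ ∈ M₁.V p ↔ u₂ ∈ M₂.V p)) ∧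
    (∀ i ∈ σN, (M₁.N i = u₁ ↔ M₂.N i = u₂)) ∧
    (∀ v₁, M₁.R u₁ v₁ → ∃ v₂, M₂.R u₂ v₂ ∧ β v₁ v₂) ∧
    (∀ v₂, M₂.R u₂ v₂ → ∃ v₁, M₁.R u₁ v₁ ∧ β v₁ v₂)

/-- `σ`-bisimilarity of two pointed ML^nom-models. -/
def BisimilarN (σP σN : Set ℕ) (M₁ M₂ : KripkeN) (w₁ : M₁.W) (w₂ : M₂.W) : Prop :=
  ∃ β : M₁.W → M₂.W → Prop, IsBisimulationN σP σN M₁ M₂ β ∧ β w₁ w₂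

/-!
Both models are filtrated through the finite set `Γ` of subformulas of `φ₁` and `φ₂`. For the
bisimulation to survive, the worlds to be identified must agree not only on the formulas of `Γ` they
satisfy but also on their mosaic: which sets of `Γ`-formulas are realized in either model by worlds
bisimilar to them. Then, if `u'` is identified with `u` and `u` is bisimilar to `v`, the world `u'`
is bisimilar to some `v'` identified with `v`, so bisimilarity passes to the quotients. As a world
named by a nominal of `Γ` is identified with no other world, these nominals still denote correctly.
Atoms outside `Γ` are irrelevant to `φ₁` and `φ₂`: propositional variables are made false everywhere
and nominals are sent to an additional isolated world, so the shared signature may be arbitrary.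
-/

namespace MLn

/-- The subformulas of a formula, including the formula itself. -/
def subformulas : MLn → Set MLn
  | .top => {.top}
  | .var p => {.var p}
  | .nom i => {.nom i}
  | .and φ ψ => insert (.and φ ψ) (φ.subformulas ∪ ψ.subformulas)
  | .not φ => insert (.not φ) φ.subformulas
  | .dia φ => insert (.dia φ) φ.subformulas

theorem finite_subformulas (φ : MLn) : φ.subformulas.Finite := by
  induction φ with
  | top | var | nom => exact Set.finite_singleton _
  | and φ ψ ihφ ihψ => exact (ihφ.union ihψ).insert _
  | not φ ih | dia φ ih => exact ih.insert _

theorem self_mem_subformulas (φ : MLn) : φ ∈ φ.subformulas := by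
  cases φ <;> simp [subformulas]

end MLn

section Bisimulation

variable {σP σN : Set ℕ} {A B C : KripkeN}

theorem IsBisimulationN.flip {β : A.W → B.W → Prop} (hβ : IsBisimulationN σP σN A B β) :
    IsBisimulationN σP σN B A (flip β) := by
  intro v u huv
  obtain ⟨hvar, hnom, forth, back⟩ := hβ u v huv
  exact ⟨fun p hp => (hvar p hp).symm, fun i hi => (hnom i hi).symm, back, forth⟩

theorem IsBisimulationN.comp {β : A.W → B.W → Prop} {γ : B.W → C.W → Prop}
    (hβ : IsBisimulationN σP σN A B β) (hγ : IsBisimulationN σP σN B C γ) :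
    IsBisimulationN σP σN A C (Relation.Comp β γ) := by
  rintro u w ⟨v, huv, hvw⟩
  obtain ⟨hvar, hnom, forth, back⟩ := hβ u v huv
  obtain ⟨hvar', hnom', forth', back'⟩ := hγ v w hvw
  refine ⟨fun p hp => (hvar p hp).trans (hvar' p hp), fun i hi => (hnom i hi).trans (hnom' i hi),
    fun u' hu' => ?_, fun w' hw' => ?_⟩
  · obtain ⟨v', hv', huv'⟩ := forth u' hu'
    obtain ⟨w', hw', hvw'⟩ := forth' v' hv'
    exact ⟨w', hw', v', huv', hvw'⟩
  · obtain ⟨v', hv', hvw'⟩ := back' w' hw'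
    obtain ⟨u', hu', huv'⟩ := back v' hv'
    exact ⟨u', hu', v', huv', hvw'⟩

theorem BisimilarN.symm {u : A.W} {v : B.W} (h : BisimilarN σP σN A B u v) :
    BisimilarN σP σN B A v u :=
  let ⟨β, hβ, huv⟩ := h
  ⟨flip β, hβ.flip, huv⟩

theorem BisimilarN.trans {u : A.W} {v : B.W} {w : C.W} (huv : BisimilarN σP σN A B u v)
    (hvw : BisimilarN σP σN B C v w) : BisimilarN σP σN A C u w :=
  let ⟨β, hβ, hu⟩ := huv
  let ⟨γ, hγ, hw⟩ := hvw
  ⟨Relation.Comp β γ, hβ.comp hγ, v, hu, hw⟩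

theorem isBisimulationN_bisimilarN : IsBisimulationN σP σN A B (BisimilarN σP σN A B) := by
  rintro u v ⟨β, hβ, huv⟩
  obtain ⟨hvar, hnom, forth, back⟩ := hβ u v huv
  refine ⟨hvar, hnom, fun u' hu' => ?_, fun v' hv' => ?_⟩
  · obtain ⟨v', hv', huv'⟩ := forth u' hu'
    exact ⟨v', hv', β, hβ, huv'⟩
  · obtain ⟨u', hu', huv'⟩ := back v' hv'
    exact ⟨u', hu', β, hβ, huv'⟩

end Bisimulation

namespace KripkeN

/-- The `Γ`-theory of a world: the formulas of `Γ` true there. As a set of elements of the subtype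
`Γ`, it ranges over a finite type when `Γ` is finite. -/
def theory (Γ : Set MLn) (M : KripkeN) (u : M.W) : Set Γ := {ψ | MLn.sat M u ψ}

theorem sat_iff_of_theory_eq {Γ : Set MLn} {M : KripkeN} {u v : M.W}
    (h : M.theory Γ u = M.theory Γ v) {ψ : MLn} (hψ : ψ ∈ Γ) : MLn.sat M u ψ ↔ MLn.sat M v ψ :=
  Set.ext_iff.1 h ⟨ψ, hψ⟩

section Filtration

open Classical in
/-- The smallest filtration of `M` along `f`, restricted to the atoms in `Γ`. The worlds are the
labels in `K`, realized or not, and an isolated world `none` that serves as denotation of the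
nominals outside `Γ`; propositional variables outside `Γ` are false everywhere. -/
noncomputable def filtration (Γ : Set MLn) (M : KripkeN) {K : Type} (f : M.W → K) : KripkeN where
  W := Option K
  nonempty := ⟨none⟩
  R := Relation.Map M.R (some ∘ f) (some ∘ f)
  V p := {x | MLn.var p ∈ Γ ∧ x ∈ some ∘ f '' M.V p}
  N i := if MLn.nom i ∈ Γ then some (f (M.N i)) else none

/-- The world of the filtration that represents a world of `M`. -/
def filtrationMk (Γ : Set MLn) (M : KripkeN) {K : Type} (f : M.W → K) (u : M.W) :
    (M.filtration Γ f).W := some (f u)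

variable {Γ : Set MLn} {M : KripkeN} {K : Type} {f : M.W → K}

theorem filtrationMk_eq_iff {u v : M.W} :
    M.filtrationMk Γ f u = M.filtrationMk Γ f v ↔ f u = f v :=
  Option.some_inj

theorem filtration_N_of_mem {i : ℕ} (hi : MLn.nom i ∈ Γ) :
    (M.filtration Γ f).N i = M.filtrationMk Γ f (M.N i) :=
  if_pos hi

theorem filtration_N_ne_of_notMem {i : ℕ} (hi : MLn.nom i ∉ Γ) (u : M.W) :
    (M.filtration Γ f).N i ≠ M.filtrationMk Γ f u := by
  simp [filtration, filtrationMk, hi]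

theorem sat_iff_of_filtrationMk_eq (hf : (M.theory Γ).FactorsThrough f) {u v : M.W}
    (huv : M.filtrationMk Γ f u = M.filtrationMk Γ f v) {ψ : MLn} (hψ : ψ ∈ Γ) :
    MLn.sat M u ψ ↔ MLn.sat M v ψ :=
  sat_iff_of_theory_eq (hf (filtrationMk_eq_iff.1 huv)) hψ

theorem mem_filtration_V_iff (hf : (M.theory Γ).FactorsThrough f) {p : ℕ} {u : M.W} :
    M.filtrationMk Γ f u ∈ (M.filtration Γ f).V p ↔ MLn.var p ∈ Γ ∧ u ∈ M.V p := by
  refine and_congr_right fun hp => ⟨?_, fun hu => ⟨u, hu, rfl⟩⟩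
  rintro ⟨v, hv, hvu⟩
  exact (sat_iff_of_filtrationMk_eq hf hvu hp).1 hv

theorem filtration_N_eq_iff (hf : (M.theory Γ).FactorsThrough f) {i : ℕ} {u : M.W} :
    (M.filtration Γ f).N i = M.filtrationMk Γ f u ↔ MLn.nom i ∈ Γ ∧ M.N i = u := by
  by_cases hi : MLn.nom i ∈ Γ
  · rw [filtration_N_of_mem hi, and_iff_right hi]
    exact ⟨fun h => (sat_iff_of_filtrationMk_eq hf h hi).1 rfl, congrArg _⟩
  · exact iff_of_false (filtration_N_ne_of_notMem hi u) fun h => hi h.1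

theorem sat_filtrationMk_iff (hf : (M.theory Γ).FactorsThrough f) {ψ : MLn}
    (hψ : ψ.subformulas ⊆ Γ) (u : M.W) :
    MLn.sat (M.filtration Γ f) (M.filtrationMk Γ f u) ψ ↔ MLn.sat M u ψ := by
  have mem : ψ ∈ Γ := hψ ψ.self_mem_subformulas
  induction ψ generalizing u with
  | top => exact Iff.rfl
  | var p => exact (mem_filtration_V_iff hf).trans (and_iff_right mem)
  | nom i => exact (filtration_N_eq_iff hf).trans (and_iff_right mem)
  | and φ ψ ihφ ihψ =>
    simp only [MLn.subformulas, Set.insert_subset_iff, Set.union_subset_iff] at hψ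
    obtain ⟨-, hφ, hψ⟩ := hψ
    exact and_congr (ihφ hφ u (hφ φ.self_mem_subformulas)) (ihψ hψ u (hψ ψ.self_mem_subformulas))
  | not ψ ih =>
    have hψ' : ψ.subformulas ⊆ Γ := (Set.subset_insert _ _).trans hψ
    exact not_congr (ih hψ' u (hψ' ψ.self_mem_subformulas))
  | dia ψ ih =>
    have hψ' : ψ.subformulas ⊆ Γ := (Set.subset_insert _ _).trans hψ
    have ih' (v : M.W) := ih hψ' v (hψ' ψ.self_mem_subformulas)
    constructor
    · rintro ⟨_, ⟨u', v, hR, hu, rfl⟩, hv⟩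
      exact (sat_iff_of_filtrationMk_eq hf hu mem).1 ⟨v, hR, (ih' v).1 hv⟩
    · rintro ⟨v, hR, hv⟩
      exact ⟨M.filtrationMk Γ f v, ⟨u, v, hR, rfl, rfl⟩, (ih' v).2 hv⟩

end Filtration

end KripkeN

theorem IsBisimulationN.filtration {σP σN : Set ℕ} {Γ : Set MLn} {A B : KripkeN} {K L : Type}
    {f : A.W → K} {g : B.W → L} {β : A.W → B.W → Prop} (hβ : IsBisimulationN σP σN A B β)
    (hf : (A.theory Γ).FactorsThrough f) (hg : (B.theory Γ).FactorsThrough g)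
    (forth : ∀ ⦃u u' v⦄, f u' = f u → β u v → ∃ v', g v' = g v ∧ β u' v')
    (back : ∀ ⦃u v v'⦄, g v' = g v → β u v → ∃ u', f u' = f u ∧ β u' v') :
    IsBisimulationN σP σN (A.filtration Γ f) (B.filtration Γ g)
      (Relation.Map β (A.filtrationMk Γ f) (B.filtrationMk Γ g)) := by
  rintro _ _ ⟨u, v, huv, rfl, rfl⟩
  obtain ⟨hvar, hnom, -, -⟩ := hβ u v huv
  refine ⟨fun p hp => ?_, fun i hi => ?_, ?_, ?_⟩
  · simp only [KripkeN.mem_filtration_V_iff hf, KripkeN.mem_filtration_V_iff hg, hvar p hp]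
  · simp only [KripkeN.filtration_N_eq_iff hf, KripkeN.filtration_N_eq_iff hg, hnom i hi]
  · rintro _ ⟨u', x, hR, hu, rfl⟩
    obtain ⟨v', hv, huv'⟩ := forth (KripkeN.filtrationMk_eq_iff.1 hu) huv
    obtain ⟨y, hR', hxy⟩ := (hβ u' v' huv').2.2.1 x hR
    exact ⟨B.filtrationMk Γ g y, ⟨v', y, hR', KripkeN.filtrationMk_eq_iff.2 hv, rfl⟩,
      x, y, hxy, rfl, rfl⟩
  · rintro _ ⟨v', y, hR, hv, rfl⟩
    obtain ⟨u', hu, huv'⟩ := back (KripkeN.filtrationMk_eq_iff.1 hv) huv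
    obtain ⟨x, hR', hxy⟩ := (hβ u' v' huv').2.2.2 y hR
    exact ⟨A.filtrationMk Γ f x, ⟨u', x, hR', KripkeN.filtrationMk_eq_iff.2 hu, rfl⟩,
      x, y, hxy, rfl, rfl⟩

section Mosaic

variable {σP σN : Set ℕ} {Γ : Set MLn} {A B C : KripkeN}

/-- The `Γ`-theories realized in `B` by the worlds `σ`-bisimilar to `u`. -/
def bisimilarTheories (σP σN : Set ℕ) (Γ : Set MLn) (A B : KripkeN) (u : A.W) : Set (Set Γ) :=
  B.theory Γ '' {v | BisimilarN σP σN A B u v}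

theorem bisimilarTheories_eq_of_bisimilarN {u : A.W} {v : B.W}
    (huv : BisimilarN σP σN A B u v) :
    bisimilarTheories σP σN Γ A C u = bisimilarTheories σP σN Γ B C v :=
  congrArg (C.theory Γ '' ·) <| Set.ext fun _ => ⟨huv.symm.trans, huv.trans⟩

/-- The label of `u` along which `A` is filtrated when `A` and `B` are filtrated together: the
`Γ`-theory of `u` and its mosaic, that is, the `Γ`-theories realized in `A` and in `B` by worlds
bisimilar to `u`. The model containing `u` comes first, so `A` and `B` are swapped for worlds of
`B`. -/
def theoryMosaic (σP σN : Set ℕ) (Γ : Set MLn) (A B : KripkeN) (u : A.W) :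
    Set Γ × Set (Set Γ) × Set (Set Γ) :=
  (A.theory Γ u, bisimilarTheories σP σN Γ A A u, bisimilarTheories σP σN Γ A B u)

theorem theory_factorsThrough_theoryMosaic :
    (A.theory Γ).FactorsThrough (theoryMosaic σP σN Γ A B) :=
  fun _ _ h => congrArg Prod.fst h

theorem exists_theoryMosaic_eq_and_bisimilarN {u u' : A.W} {v : B.W}
    (hu : theoryMosaic σP σN Γ A B u' = theoryMosaic σP σN Γ A B u)
    (huv : BisimilarN σP σN A B u v) :
    ∃ v', theoryMosaic σP σN Γ B A v' = theoryMosaic σP σN Γ B A v ∧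
      BisimilarN σP σN A B u' v' := by
  obtain ⟨-, hA, hB⟩ : _ ∧ bisimilarTheories σP σN Γ A A u' = bisimilarTheories σP σN Γ A A u ∧
      bisimilarTheories σP σN Γ A B u' = bisimilarTheories σP σN Γ A B u := by
    simpa only [theoryMosaic, Prod.mk.injEq] using hu
  obtain ⟨v', huv', hv'⟩ : B.theory Γ v ∈ bisimilarTheories σP σN Γ A B u' :=
    hB ▸ Set.mem_image_of_mem _ huv
  have transport {C : KripkeN}
      (hC : bisimilarTheories σP σN Γ A C u' = bisimilarTheories σP σN Γ A C u) :
      bisimilarTheories σP σN Γ B C v' = bisimilarTheories σP σN Γ B C v :=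
    calc bisimilarTheories σP σN Γ B C v'
      _ = bisimilarTheories σP σN Γ A C u' := (bisimilarTheories_eq_of_bisimilarN huv').symm
      _ = bisimilarTheories σP σN Γ A C u := hC
      _ = bisimilarTheories σP σN Γ B C v := bisimilarTheories_eq_of_bisimilarN huv
  exact ⟨v', congrArg₂ Prod.mk hv' (congrArg₂ Prod.mk (transport hB) (transport hA)), huv'⟩

theorem isBisimulationN_filtration_theoryMosaic :
    IsBisimulationN σP σN (A.filtration Γ (theoryMosaic σP σN Γ A B))
      (B.filtration Γ (theoryMosaic σP σN Γ B A))
      (Relation.Map (BisimilarN σP σN A B) (A.filtrationMk Γ _) (B.filtrationMk Γ _)) := by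
  refine isBisimulationN_bisimilarN.filtration theory_factorsThrough_theoryMosaic
    theory_factorsThrough_theoryMosaic (fun _ _ _ => exists_theoryMosaic_eq_and_bisimilarN) ?_
  intro u v v' hv huv
  obtain ⟨u', hu, hvu'⟩ := exists_theoryMosaic_eq_and_bisimilarN hv huv.symm
  exact ⟨u', hu, hvu'.symm⟩

end Mosaic

theorem Knom_finite_bisimilar_model_property_general
    (φ₁ φ₂ : MLn) (σP σN : Set ℕ) (M₁ M₂ : KripkeN) (w₁ : M₁.W) (w₂ : M₂.W)
    (h₁ : MLn.sat M₁ w₁ φ₁) (h₂ : MLn.sat M₂ w₂ φ₂) (hbis : BisimilarN σP σN M₁ M₂ w₁ w₂) :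
    ∃ (M₁' M₂' : KripkeN) (w₁' : M₁'.W) (w₂' : M₂'.W),
      Finite M₁'.W ∧ Finite M₂'.W ∧
      MLn.sat M₁' w₁' φ₁ ∧ MLn.sat M₂' w₂' φ₂ ∧
      BisimilarN σP σN M₁' M₂' w₁' w₂' := by
  let Γ : Set MLn := φ₁.subformulas ∪ φ₂.subformulas
  have : Finite Γ := (φ₁.finite_subformulas.union φ₂.finite_subformulas).to_subtype
  have finite_labels : Finite (Option (Set Γ × Set (Set Γ) × Set (Set Γ))) := inferInstance
  exact ⟨M₁.filtration Γ (theoryMosaic σP σN Γ M₁ M₂),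
    M₂.filtration Γ (theoryMosaic σP σN Γ M₂ M₁), M₁.filtrationMk Γ _ w₁, M₂.filtrationMk Γ _ w₂,
    finite_labels, finite_labels,
    (KripkeN.sat_filtrationMk_iff theory_factorsThrough_theoryMosaic
      Set.subset_union_left w₁).2 h₁,
    (KripkeN.sat_filtrationMk_iff theory_factorsThrough_theoryMosaic
      Set.subset_union_right w₂).2 h₂,
    _, isBisimulationN_filtration_theoryMosaic, w₁, w₂, hbis, rfl, rfl⟩

/-- K^nom has the finite bisimilar model property. -/
theorem Knom_finite_bisimilar_model_property
    (φ₁ φ₂ : MLn) (σP σN : Set ℕ)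
    (hσP : σP = φ₁.sigP ∩ φ₂.sigP) (hσN : σN = φ₁.sigN ∩ φ₂.sigN)
    (M₁ M₂ : KripkeN) (w₁ : M₁.W) (w₂ : M₂.W)
    (h₁ : MLn.sat M₁ w₁ φ₁) (h₂ : MLn.sat M₂ w₂ φ₂)
    (hbis : BisimilarN σP σN M₁ M₂ w₁ w₂) :
    ∃ (M₁' M₂' : KripkeN) (w₁' : M₁'.W) (w₂' : M₂'.W),
      Finite M₁'.W ∧ Finite M₂'.W ∧
      MLn.sat M₁' w₁' φ₁ ∧ MLn.sat M₂' w₂' φ₂ ∧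
      BisimilarN σP σN M₁' M₂' w₁' w₂' :=
  Knom_finite_bisimilar_model_property_general φ₁ φ₂ σP σN M₁ M₂ w₁ w₂ h₁ h₂ hbis
end

section
/- (Schützenberger–McNaughton–Papert theorem.) For a regular language L ⊆ A⁺ over a finite alphabet A, the following are equivalent: (i) L is star-free; (ii) L is accepted by a counter-free DFA; (iii) L is recognised by a finite aperiodic semigroup; (iv) L is FO(<)-definable. -/
open FirstOrder

/-! ### Star-free languages -/

/-- The star-free languages over `A`: the smallest class containing `A⁺` and the
singletons `{a}`, closed under concatenation, union and complementation (in `A⁺`). -/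
inductive StarFree {A : Type} : Set (List A) → Prop
  | all : StarFree {w | w ≠ []}
  | single (a : A) : StarFree {[a]}
  | concat {L₁ L₂ : Set (List A)} : StarFree L₁ → StarFree L₂ →
      StarFree {w | ∃ u ∈ L₁, ∃ v ∈ L₂, w = u ++ v}
  | union {L₁ L₂ : Set (List A)} : StarFree L₁ → StarFree L₂ → StarFree (L₁ ∪ L₂)
  | compl {L₀ : Set (List A)} : StarFree L₀ → StarFree ({w | w ≠ []} \ L₀)

/-! ### Counter-free DFAs -/

/-- The `n`-fold concatenation `w^n` of a word `w`. -/
def wpow {A : Type} (w : List A) (n : ℕ) : List A := (List.replicate n w).flatten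

/-- A DFA is counter-free if no transition function `δ_w`, `w ∈ A⁺`, has a
non-trivial cycle. -/
def IsCounterFree {A σ : Type} (M : DFA A σ) : Prop :=
  ¬ ∃ (q : σ) (w : List A) (n : ℕ), w ≠ [] ∧ 1 < n ∧
      M.evalFrom q w ≠ q ∧ M.evalFrom q (wpow w n) = q

/-! ### Finite aperiodic semigroups -/

/-- A bundled finite semigroup. -/
structure FinSemigroup where
  carrier : Type
  [str : Semigroup carrier]
  [fin : Finite carrier]

attribute [instance] FinSemigroup.str FinSemigroup.fin

/-- `spow s n = s^(n+1)`: powers (with positive exponents) in a semigroup. -/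
def spow {S : Type} [Semigroup S] (s : S) : ℕ → S
  | 0 => s
  | n + 1 => spow s n * s

/-- A semigroup is aperiodic if `s^n = s^(n+1)` for some `n ≥ 1` and all `s`. -/
def IsAperiodic (S : Type) [Semigroup S] : Prop :=
  ∃ n : ℕ, ∀ s : S, spow s n = spow s (n + 1)

/-- `h : A⁺ → S` is a semigroup homomorphism from the free semigroup `A⁺` of nonempty
words under concatenation. -/
def IsWordHom {A S : Type} [Semigroup S] (h : List A → S) : Prop :=
  ∀ u v : List A, u ≠ [] → v ≠ [] → h (u ++ v) = h u * h v

/-- Recognition of a language by a semigroup homomorphism. -/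
def RecognisedBy {A S : Type} [Semigroup S] (h : List A → S) (F : Set S)
    (L : Set (List A)) : Prop :=
  IsWordHom h ∧ L = {w : List A | w ≠ [] ∧ h w ∈ F}

/-! ### FO(<)-definability -/

/-- Relation symbols of the word signature `σ_A`: a unary predicate for each letter
`a ∈ A` and the binary predicate `<`. -/
def WordRel (A : Type) : ℕ → Type
  | 1 => A
  | 2 => Unit
  | _ => Empty

/-- The first-order signature `σ_A` of words over `A`. -/
def wordLang (A : Type) : FirstOrder.Language := ⟨fun _ => Empty, WordRel A⟩

/-- A word regarded as a first-order `σ_A`-structure on its set of positions. -/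
def wordStructure {A : Type} (w : List A) : (wordLang A).Structure (Fin w.length) where
  funMap := fun f _ => Empty.elim f
  RelMap := fun {n} r =>
    match n, r with
    | 1, a => fun v => w.get (v 0) = a
    | 2, _ => fun v => v 0 < v 1

/-- Truth of a `σ_A`-sentence in a word. -/
def SatWord {A : Type} (w : List A) (θ : (wordLang A).Sentence) : Prop :=
  letI := wordStructure w
  (Fin w.length) ⊨ θ

/-- A language `L ⊆ A⁺` is FO(<)-definable if it is the set of nonempty words
satisfying some `σ_A`-sentence. -/
def FODefinable {A : Type} (L : Set (List A)) : Prop :=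
  ∃ θ : (wordLang A).Sentence, L = {w : List A | w ≠ [] ∧ SatWord w θ}

/-!
All four conditions say that the language is recognised by a finite aperiodic monoid.

A star-free expression translates directly into a formula about the factor between two positions.
Whether a word satisfies a sentence of quantifier depth `k` depends only on its Ehrenfeucht–Fraïssé
type of rank `k`, after one more round that detects the empty word; these types form a finite
monoid, which is aperiodic because a large power of a word has the type of the next power. The step
from aperiodic monoids to star-free expressions is an induction on the monoid and the alphabet: if
the letter `c` has a value other than `1`, cut a word at its occurrences of `c` and read the values
of the blocks as a word over a new alphabet, to be evaluated in the local divisor of the monoid at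
the value of `c`, which is aperiodic and strictly smaller.
-/

/-! ### Star-free languages with the empty word -/

/-- Star-free languages of possibly empty words, with complements relative to `A*`. -/
inductive StarFreeWithNil {A : Type*} : Language A → Prop
  | one : StarFreeWithNil 1
  | single (a : A) : StarFreeWithNil {[a]}
  | mul {K L : Language A} : StarFreeWithNil K → StarFreeWithNil L → StarFreeWithNil (K * L)
  | add {K L : Language A} : StarFreeWithNil K → StarFreeWithNil L → StarFreeWithNil (K + L)
  | compl {L : Language A} : StarFreeWithNil L → StarFreeWithNil Lᶜ

theorem mem_compl_language {A : Type*} {L : Language A} {w : List A} : w ∈ Lᶜ ↔ w ∉ L := Iff.rfl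

namespace StarFreeWithNil

variable {A : Type*} {K L : Language A}

theorem top : StarFreeWithNil (⊤ : Language A) := by
  simpa only [add_eq_sup, sup_compl_eq_top] using (one (A := A)).add one.compl

theorem bot : StarFreeWithNil (⊥ : Language A) := by
  simpa only [compl_top] using (top (A := A)).compl

theorem inf (hK : StarFreeWithNil K) (hL : StarFreeWithNil L) : StarFreeWithNil (K ⊓ L) := by
  simpa only [add_eq_sup, compl_sup, compl_compl] using (hK.compl.add hL.compl).compl

theorem iSup {ι : Type*} [Finite ι] {L : ι → Language A} (hL : ∀ i, StarFreeWithNil (L i)) :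
    StarFreeWithNil (⨆ i, L i) := by
  have := Fintype.ofFinite ι
  rw [← Finset.sup_univ_eq_iSup]
  exact Finset.sup_induction bot (fun _ h₁ _ h₂ => h₁.add h₂) fun i _ => hL i

end StarFreeWithNil

namespace StarFree

variable {A : Type}

theorem empty : StarFree (∅ : Set (List A)) := by
  simpa only [sdiff_self] using! (all (A := A)).compl

theorem nil_notMem {L : Set (List A)} (hL : StarFree L) : [] ∉ L := by
  induction hL with
  | all => simp
  | single a => simp
  | concat _ _ h₁ _ =>
    rintro ⟨u, hu, v, _, huv⟩
    exact h₁ ((List.nil_eq_append_iff.mp huv).1 ▸ hu)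
  | union _ _ h₁ h₂ => exact fun h => h.elim h₁ h₂
  | compl => simp

theorem ne_nil_mul {L₁ L₂ : Language A} (h₁ : StarFree {w | w ≠ [] ∧ w ∈ L₁})
    (h₂ : StarFree {w | w ≠ [] ∧ w ∈ L₂}) : StarFree {w | w ≠ [] ∧ w ∈ L₁ * L₂} := by
  classical
  have h (p : Prop) {L : Set (List A)} (hL : StarFree L) : StarFree {w | p ∧ w ∈ L} := by
    by_cases hp : p
    · simpa only [hp, true_and] using! hL
    · simpa only [hp, false_and] using! empty
  convert ((h₁.concat h₂).union (h ([] ∈ L₁) h₂)).union (h ([] ∈ L₂) h₁) using 1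
  ext w
  simp only [Set.mem_ofPred_eq, Set.mem_union, Language.mem_mul]
  constructor
  · rintro ⟨hw, u, hu, v, hv, rfl⟩
    rcases eq_or_ne u [] with rfl | hu'
    · exact .inl (.inr ⟨hu, hw, hv⟩)
    rcases eq_or_ne v [] with rfl | hv'
    · rw [List.append_nil] at hw ⊢
      exact .inr ⟨hv, hw, hu⟩
    · exact .inl (.inl ⟨u, ⟨hu', hu⟩, v, ⟨hv', hv⟩, rfl⟩)
  · rintro ((⟨u, ⟨hu', hu⟩, v, ⟨-, hv⟩, rfl⟩ | ⟨h₀, hw, hv⟩) | ⟨h₀, hw, hu⟩)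
    · exact ⟨by simp [hu'], u, hu, v, hv, rfl⟩
    · exact ⟨hw, [], h₀, w, hv, rfl⟩
    · exact ⟨hw, w, hu, [], h₀, w.append_nil⟩

end StarFree

theorem StarFreeWithNil.toStarFree {A : Type} {L : Language A} (hL : StarFreeWithNil L) :
    StarFree {w | w ≠ [] ∧ w ∈ L} := by
  induction hL with
  | one =>
    convert StarFree.empty (A := A)
    ext w
    exact iff_of_false (fun h => h.1 h.2) id
  | single a =>
    convert StarFree.single a
    ext w
    exact ⟨And.right, fun h => ⟨(h : w = [a]) ▸ List.cons_ne_nil a [], h⟩⟩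
  | mul _ _ h₁ h₂ => exact h₁.ne_nil_mul h₂
  | add _ _ h₁ h₂ =>
    convert h₁.union h₂
    ext w
    exact and_or_left
  | @compl L _ h =>
    convert h.compl
    ext w
    exact and_congr_right fun hw => not_congr (and_iff_right hw).symm

section WordsOver

variable {A : Type*} {B C : Set A} {u v : List A} {c : A}

/-- The language `B*` of words with letters in `B`, as a language over the full alphabet. -/
def wordsOver (B : Set A) : Language A := {w | ∀ a ∈ w, a ∈ B}

theorem nil_mem_wordsOver : [] ∈ wordsOver B := fun _ h => (List.not_mem_nil h).elim

theorem cons_mem_wordsOver : c :: v ∈ wordsOver B ↔ c ∈ B ∧ v ∈ wordsOver B :=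
  List.forall_mem_cons

theorem append_mem_wordsOver : u ++ v ∈ wordsOver B ↔ u ∈ wordsOver B ∧ v ∈ wordsOver B :=
  List.forall_mem_append

theorem wordsOver_mono (h : B ⊆ C) : wordsOver B ≤ wordsOver C := fun _ hw a ha => h (hw a ha)

theorem starFreeWithNil_wordsOver [Finite A] (B : Set A) : StarFreeWithNil (wordsOver B) := by
  have h : wordsOver B = (⨆ a : {a // a ∉ B}, ⊤ * ({[a.1]} * ⊤))ᶜ := by
    ext w
    rw [mem_compl_language, Language.mem_iSup, Subtype.exists]
    push Not
    refine forall_congr' fun a => ?_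
    constructor
    · rintro hw ha ⟨u, -, -, ⟨_, rfl, v, -, rfl⟩, rfl⟩
      exact ha (hw (by simp))
    · intro hw ha
      obtain ⟨u, v, rfl⟩ := List.append_of_mem ha
      by_contra haB
      exact hw haB ⟨u, trivial, a :: v, ⟨[a], rfl, v, trivial, rfl⟩, rfl⟩
  rw [h]
  exact (StarFreeWithNil.iSup fun _ => .mul .top (.mul (.single _) .top)).compl

end WordsOver

/-! ### Aperiodic semigroups and monoids -/

section Aperiodic

variable {M N S : Type}

theorem spow_eq_pow [Monoid M] (x : M) (n : ℕ) : spow x n = x ^ (n + 1) := by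
  induction n with
  | zero => exact (pow_one x).symm
  | succ n ih => rw [spow, ih, ← pow_succ]

theorem map_spow [Semigroup S] [Semigroup N] (f : S →ₙ* N) (s : S) (n : ℕ) :
    f (spow s n) = spow (f s) n := by
  induction n with
  | zero => rfl
  | succ n ih => rw [spow, map_mul, ih, spow]

theorem isAperiodic_iff_pow [Monoid M] : IsAperiodic M ↔ ∃ n : ℕ, ∀ x : M, x ^ n = x ^ (n + 1) := by
  simp only [IsAperiodic, spow_eq_pow]
  exact ⟨fun ⟨n, h⟩ => ⟨n + 1, h⟩, fun ⟨n, h⟩ => ⟨n, fun x => by rw [pow_succ, h, ← pow_succ]⟩⟩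

theorem isAperiodic_of_forall_exists [Monoid M] [Finite M]
    (h : ∀ x : M, ∃ n : ℕ, x ^ n = x ^ (n + 1)) : IsAperiodic M := by
  choose n hn using h
  obtain ⟨N, hN⟩ := (Set.finite_range n).bddAbove
  refine isAperiodic_iff_pow.mpr ⟨N, fun x => ?_⟩
  obtain ⟨k, rfl⟩ := Nat.exists_eq_add_of_le (hN ⟨x, rfl⟩)
  rw [pow_add, hn, ← pow_add, Nat.add_right_comm]

namespace IsAperiodic

theorem of_injective [Semigroup S] [Semigroup N] (hN : IsAperiodic N) (f : S →ₙ* N)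
    (hf : Function.Injective f) : IsAperiodic S := by
  obtain ⟨n, hn⟩ := hN
  exact ⟨n, fun s => hf (by rw [map_spow, map_spow, hn])⟩

theorem of_surjective [Semigroup S] [Semigroup N] (hS : IsAperiodic S) (f : S →ₙ* N)
    (hf : Function.Surjective f) : IsAperiodic N := by
  obtain ⟨n, hn⟩ := hS
  exact ⟨n, hf.forall.mpr fun s => by rw [← map_spow, ← map_spow, hn]⟩

theorem withOne [Semigroup S] (hS : IsAperiodic S) : IsAperiodic (WithOne S) := by
  obtain ⟨n, hn⟩ := hS
  refine ⟨n, fun x => ?_⟩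
  cases x with
  | one => rw [spow_eq_pow, spow_eq_pow, one_pow, one_pow]
  | coe s =>
    change spow (WithOne.coeMulHom s) n = spow (WithOne.coeMulHom s) (n + 1)
    rw [← map_spow, ← map_spow, hn]

theorem eq_one_of_mul_eq_one [Monoid M] (hM : IsAperiodic M) {u c : M} (h : u * c = 1) : c = 1 := by
  obtain ⟨n, hn⟩ := isAperiodic_iff_pow.mp hM
  calc
    c = u ^ n * c ^ n * c := by rw [pow_mul_pow_eq_one n h, one_mul]
    _ = u ^ n * c ^ n := by rw [mul_assoc, ← pow_succ, ← hn]
    _ = 1 := pow_mul_pow_eq_one n h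

end IsAperiodic

end Aperiodic

/-! ### Local divisors -/

section LocalDivisor

variable {M : Type*} [Monoid M] {c : M}

/-- The elements `u` for which `u * c` is also a right multiple of `c`. -/
def localDivisorSubmonoid (c : M) : Submonoid M where
  carrier := {u | ∃ v, u * c = c * v}
  one_mem' := ⟨1, by rw [one_mul, mul_one]⟩
  mul_mem' := by
    rintro u₁ u₂ ⟨v₁, h₁⟩ ⟨v₂, h₂⟩
    exact ⟨v₁ * v₂, by rw [mul_assoc, h₂, ← mul_assoc, h₁, mul_assoc]⟩

/-- The congruence identifying `u₁` and `u₂` when `u₁ * c = u₂ * c`. -/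
def localDivisorCon (c : M) : Con (localDivisorSubmonoid c) where
  r u₁ u₂ := (u₁ * c : M) = u₂ * c
  iseqv := ⟨fun _ => rfl, Eq.symm, Eq.trans⟩
  mul' := by
    rintro ⟨u₁, -⟩ ⟨u₂, -⟩ ⟨v₁, -⟩ ⟨v₂, w, hw⟩ (hu : u₁ * c = u₂ * c) (hv : v₁ * c = v₂ * c)
    change u₁ * v₁ * c = u₂ * v₂ * c
    rw [mul_assoc, hv, hw, ← mul_assoc, hu, mul_assoc, ← hw, ← mul_assoc]

/-- The local divisor of `M` at `c`: the set `M * c ∩ c * M` with the product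
`(u * c) ∘ (v * c) = u * v * c`, encoded as a quotient of a submonoid of `M`. -/
abbrev LocalDivisor (c : M) := (localDivisorCon c).Quotient

namespace LocalDivisor

/-- The element of `M * c ∩ c * M` represented by an element of the local divisor. -/
def val (x : LocalDivisor c) : M := Con.liftOn x (fun u => u * c) fun _ _ => id

theorem val_injective : Function.Injective (val (c := c)) := fun x y =>
  Con.induction_on₂ x y fun _ _ h => (Con.eq _).mpr h

/-- The element `c * t * c` of the local divisor at `c`. -/
def ofMul (c t : M) : LocalDivisor c :=
  ((⟨c * t, t * c, mul_assoc c t c⟩ : localDivisorSubmonoid c) : LocalDivisor c)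

theorem val_ofMul_mul (t : M) (x : LocalDivisor c) : val (ofMul c t * x) = c * t * val x :=
  Con.induction_on x fun _ => mul_assoc _ _ _

theorem val_prod_ofMul (ts : List M) :
    val (ts.map (ofMul c)).prod = (ts.map (c * ·)).prod * c := by
  induction ts with
  | nil => rfl
  | cons t ts ih =>
    simp only [List.map_cons, List.prod_cons, val_ofMul_mul, ih, mul_assoc]

instance [Finite M] : Finite (LocalDivisor c) := .of_injective val val_injective

theorem isAperiodic {M : Type} [Monoid M] (hM : IsAperiodic M) (c : M) :
    IsAperiodic (LocalDivisor c) :=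
  (hM.of_injective (localDivisorSubmonoid c).subtype.toMulHom Subtype.val_injective).of_surjective
    (localDivisorCon c).mk'.toMulHom (localDivisorCon c).mk'_surjective

theorem card_lt {M : Type} [Monoid M] [Finite M] (hM : IsAperiodic M) {c : M} (hc : c ≠ 1) :
    Nat.card (LocalDivisor c) < Nat.card M := by
  have := Fintype.ofFinite M
  have := Fintype.ofFinite (LocalDivisor c)
  have one_notMem : (1 : M) ∉ Set.range (val (c := c)) := by
    rintro ⟨x, hx⟩
    induction x using Con.induction_on with
    | H u => exact hc (hM.eq_one_of_mul_eq_one hx)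
  rw [Nat.card_eq_fintype_card, Nat.card_eq_fintype_card]
  exact Fintype.card_lt_of_injective_of_notMem val val_injective one_notMem

end LocalDivisor

end LocalDivisor

/-! ### Block decompositions -/

section Blocks

variable {A M : Type*} [Monoid M] {f : A → M} {c : A} {B : Set A}

/-- The words over `B` whose letters, evaluated by `f`, multiply to `p`. -/
def valueLang (f : A → M) (B : Set A) (p : M) : Language A :=
  {w | w ∈ wordsOver B ∧ (w.map f).prod = p}

/-- The words `c v₁ c v₂ ⋯ c vₙ` with blocks `vᵢ ∈ B*` whose sequence of block values, a word
over the alphabet `M`, belongs to `K`. -/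
def blockLang (f : A → M) (c : A) (B : Set A) (K : Language M) : Language A :=
  {x | ∃ vs : List (List A), (∀ v ∈ vs, v ∈ wordsOver B) ∧
    vs.map (fun v => (v.map f).prod) ∈ K ∧ vs.flatMap (c :: ·) = x}

theorem exists_blocks_of_mem_wordsOver_insert {w : List A} (hw : w ∈ wordsOver (insert c B)) :
    ∃ u ∈ wordsOver B, ∃ vs : List (List A), (∀ v ∈ vs, v ∈ wordsOver B) ∧
      u ++ vs.flatMap (c :: ·) = w := by
  induction w with
  | nil => exact ⟨[], nil_mem_wordsOver, [], List.forall_mem_nil _, rfl⟩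
  | cons a w ih =>
    obtain ⟨ha, hw⟩ := cons_mem_wordsOver.mp hw
    obtain ⟨u, hu, vs, hvs, rfl⟩ := ih hw
    rcases ha with rfl | ha
    · exact ⟨[], nil_mem_wordsOver, u :: vs, List.forall_mem_cons.mpr ⟨hu, hvs⟩, rfl⟩
    · exact ⟨a :: u, cons_mem_wordsOver.mpr ⟨ha, hu⟩, vs, hvs, rfl⟩

theorem flatMap_cons_mem_wordsOver {vs : List (List A)} (hvs : ∀ v ∈ vs, v ∈ wordsOver B) :
    vs.flatMap (c :: ·) ∈ wordsOver (insert c B) := by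
  intro a ha
  obtain ⟨v, hv, hav⟩ := List.mem_flatMap.mp ha
  exact (List.mem_cons.mp hav).imp_right (hvs v hv a)

theorem intercalate_singleton_cons (u : List A) (vs : List (List A)) :
    [c].intercalate (u :: vs) = u ++ vs.flatMap (c :: ·) := by
  induction vs generalizing u with
  | nil => simp
  | cons v vs ih => rw [List.intercalate_cons_cons, ih]; simp

theorem blocks_eq_of_flatMap_eq (hc : c ∉ B) {vs vs' : List (List A)}
    (hvs : ∀ v ∈ vs, v ∈ wordsOver B) (hvs' : ∀ v ∈ vs', v ∈ wordsOver B)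
    (h : vs.flatMap (c :: ·) = vs'.flatMap (c :: ·)) : vs = vs' := by
  classical
  have splitOn_eq {ws : List (List A)} (hws : ∀ v ∈ ws, v ∈ wordsOver B) :
      (ws.flatMap (c :: ·)).splitOn c = [] :: ws := by
    rw [← List.nil_append (ws.flatMap _), ← intercalate_singleton_cons]
    exact List.splitOn_intercalate c
      (List.forall_mem_cons.mpr ⟨List.not_mem_nil, fun v hv hcv => hc (hws v hv c hcv)⟩)
      (List.cons_ne_nil _ _)
  exact (List.cons.inj <| by rw [← splitOn_eq hvs, h, splitOn_eq hvs']).2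

theorem blockLang_one : blockLang f c B 1 = 1 := by
  ext x
  constructor
  · rintro ⟨vs, -, hK, rfl⟩
    rw [List.map_eq_nil_iff.mp hK]
    rfl
  · rintro rfl
    exact ⟨[], List.forall_mem_nil _, rfl, rfl⟩

theorem blockLang_single (m : M) : blockLang f c B {[m]} = {[c]} * valueLang f B m := by
  ext x
  constructor
  · rintro ⟨vs, hvs, hK, rfl⟩
    obtain ⟨v, rfl, hv⟩ := List.map_eq_singleton_iff.mp hK
    exact ⟨[c], rfl, v, ⟨hvs v List.mem_cons_self, hv⟩, by simp⟩
  · rintro ⟨_, rfl, v, ⟨hv, rfl⟩, rfl⟩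
    exact ⟨[v], List.forall_mem_singleton.mpr hv, rfl, by simp⟩

theorem blockLang_mul (K L : Language M) :
    blockLang f c B (K * L) = blockLang f c B K * blockLang f c B L := by
  ext x
  constructor
  · rintro ⟨vs, hvs, ⟨k, hk, l, hl, hkl⟩, rfl⟩
    obtain ⟨vs, ws, rfl, rfl, rfl⟩ := List.map_eq_append_iff.mp hkl.symm
    obtain ⟨hvs, hws⟩ := List.forall_mem_append.mp hvs
    exact ⟨_, ⟨vs, hvs, hk, rfl⟩, _, ⟨ws, hws, hl, rfl⟩, List.flatMap_append.symm⟩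
  · rintro ⟨_, ⟨vs, hvs, hk, rfl⟩, _, ⟨ws, hws, hl, rfl⟩, rfl⟩
    exact ⟨vs ++ ws, List.forall_mem_append.mpr ⟨hvs, hws⟩, ⟨_, hk, _, hl, List.map_append.symm⟩,
      List.flatMap_append⟩

theorem blockLang_add (K L : Language M) :
    blockLang f c B (K + L) = blockLang f c B K + blockLang f c B L := by
  ext x
  constructor
  · rintro ⟨vs, hvs, hK | hL, rfl⟩
    · exact .inl ⟨vs, hvs, hK, rfl⟩
    · exact .inr ⟨vs, hvs, hL, rfl⟩
  · rintro (⟨vs, hvs, hK, rfl⟩ | ⟨vs, hvs, hL, rfl⟩)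
    · exact ⟨vs, hvs, .inl hK, rfl⟩
    · exact ⟨vs, hvs, .inr hL, rfl⟩

theorem blockLang_compl (hc : c ∉ B) (K : Language M) :
    blockLang f c B Kᶜ = blockLang f c B ⊤ ⊓ (blockLang f c B K)ᶜ := by
  ext x
  constructor
  · rintro ⟨vs, hvs, hK, rfl⟩
    refine ⟨⟨vs, hvs, trivial, rfl⟩, ?_⟩
    rintro ⟨vs', hvs', hK', h⟩
    exact hK (blocks_eq_of_flatMap_eq hc hvs' hvs h ▸ hK')
  · rintro ⟨⟨vs, hvs, -, rfl⟩, h⟩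
    exact ⟨vs, hvs, fun hK => h ⟨vs, hvs, hK, rfl⟩, rfl⟩

theorem blockLang_top : blockLang f c B ⊤ = 1 + {[c]} * wordsOver (insert c B) := by
  ext x
  constructor
  · rintro ⟨_ | ⟨v, vs⟩, hvs, -, rfl⟩
    · exact .inl rfl
    · exact .inr ⟨[c], rfl, _, (cons_mem_wordsOver.mp (flatMap_cons_mem_wordsOver hvs)).2, rfl⟩
  · rintro (rfl | ⟨_, rfl, w, hw, rfl⟩)
    · exact ⟨[], List.forall_mem_nil _, trivial, rfl⟩
    · obtain ⟨u, hu, vs, hvs, rfl⟩ := exists_blocks_of_mem_wordsOver_insert hw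
      exact ⟨u :: vs, List.forall_mem_cons.mpr ⟨hu, hvs⟩, trivial, rfl⟩

theorem StarFreeWithNil.blockLang [Finite A] (hc : c ∉ B)
    (hB : ∀ p, StarFreeWithNil (valueLang f B p)) {K : Language M} (hK : StarFreeWithNil K) :
    StarFreeWithNil (blockLang f c B K) := by
  induction hK with
  | one => rw [blockLang_one]; exact .one
  | single m => rw [blockLang_single]; exact .mul (.single c) (hB m)
  | mul _ _ h₁ h₂ => rw [blockLang_mul]; exact h₁.mul h₂
  | add _ _ h₁ h₂ => rw [blockLang_add]; exact h₁.add h₂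
  | compl _ h =>
    rw [blockLang_compl hc, blockLang_top]
    exact .inf (.add .one (.mul (.single c) (starFreeWithNil_wordsOver _))) h.compl

theorem LocalDivisor.val_prod_blockValues (vs : List (List A)) :
    ((vs.map fun v => (v.map f).prod).map (ofMul (f c))).prod.val =
      ((vs.flatMap (c :: ·)).map f).prod * f c := by
  rw [val_prod_ofMul]
  congr 1
  induction vs with
  | nil => rfl
  | cons v vs ih => simp [-List.map_map, ih, mul_assoc]

/-- The terms of the sum are indexed by the value of the prefix before the first `c`, the local
divisor value of the part up to the last `c`, and the value of the suffix after it. -/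
theorem valueLang_insert (p : M) :
    valueLang f (insert c B) p = valueLang f B p +
      ⨆ t : {t : M × LocalDivisor (f c) × M // t.1 * t.2.1.val * t.2.2 = p},
        valueLang f B t.1.1 *
          (blockLang f c B (valueLang (LocalDivisor.ofMul (f c)) Set.univ t.1.2.1) *
            ({[c]} * valueLang f B t.1.2.2)) := by
  ext w
  rw [Language.mem_add, Language.mem_iSup]
  constructor
  · rintro ⟨hw, rfl⟩
    obtain ⟨u, hu, vs, hvs, rfl⟩ := exists_blocks_of_mem_wordsOver_insert hw
    rcases vs.eq_nil_or_concat' with rfl | ⟨vs, v, rfl⟩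
    · exact .inl ⟨by simpa using hu, rfl⟩
    · obtain ⟨hvs, hv⟩ := List.forall_mem_append.mp hvs
      let q := ((vs.map fun v => (v.map f).prod).map (LocalDivisor.ofMul (f c))).prod
      refine .inr ⟨⟨((u.map f).prod, q, (v.map f).prod), ?_⟩, u, ⟨hu, rfl⟩, _,
        ⟨_, ⟨vs, hvs, ⟨fun _ _ => Set.mem_univ _, rfl⟩, rfl⟩,
          _, ⟨[c], rfl, v, ⟨hv v List.mem_cons_self, rfl⟩, rfl⟩, rfl⟩, by simp⟩
      simp [q, -List.map_map, LocalDivisor.val_prod_blockValues, mul_assoc]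
  · rintro (⟨hw, rfl⟩ | ⟨⟨⟨_, _, _⟩, rfl⟩, u, ⟨hu, rfl⟩, _,
      ⟨_, ⟨vs, hvs, ⟨-, rfl⟩, rfl⟩, _, ⟨_, rfl, v, ⟨hv, rfl⟩, rfl⟩, rfl⟩, rfl⟩)
    · exact ⟨wordsOver_mono (Set.subset_insert c B) hw, rfl⟩
    · have hB := wordsOver_mono (Set.subset_insert c B)
      refine ⟨append_mem_wordsOver.mpr ⟨hB hu, append_mem_wordsOver.mpr
        ⟨flatMap_cons_mem_wordsOver hvs, cons_mem_wordsOver.mpr ⟨.inl rfl, hB hv⟩⟩⟩, ?_⟩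
      simp [-List.map_map, LocalDivisor.val_prod_blockValues, mul_assoc]

theorem valueLang_eq_of_forall_eq_one (hf : ∀ b ∈ B, f b = 1) (p : M) :
    valueLang f B p = {w | w ∈ wordsOver B ∧ 1 = p} := by
  ext w
  refine and_congr_right fun hw => ?_
  rw [List.prod_eq_one (List.forall_mem_map.mpr fun a ha => hf a (hw a ha))]

end Blocks

theorem starFreeWithNil_valueLang {A M : Type} [Finite A] [Monoid M] [Finite M]
    (hM : IsAperiodic M) (f : A → M) (B : Set A) (p : M) : StarFreeWithNil (valueLang f B p) := by
  induction hn : Nat.card M using Nat.strong_induction_on generalizing A M with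
  | _ n ihM =>
  subst hn
  induction B using WellFoundedLT.induction generalizing p with
  | _ B ihB =>
  by_cases hf : ∀ b ∈ B, f b = 1
  · rw [valueLang_eq_of_forall_eq_one hf]
    by_cases hp : 1 = p
    · simpa only [hp, and_true] using! starFreeWithNil_wordsOver B
    · simpa only [hp, and_false] using! StarFreeWithNil.bot
  · push Not at hf
    obtain ⟨c, hcB, hc⟩ := hf
    have hB (q : M) : StarFreeWithNil (valueLang f (B \ {c}) q) :=
      ihB _ (Set.sdiff_singleton_ssubset.mpr hcB) q
    have hblock (q : LocalDivisor (f c)) :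
        StarFreeWithNil (valueLang (LocalDivisor.ofMul (f c)) Set.univ q) :=
      ihM _ (LocalDivisor.card_lt hM hc) (LocalDivisor.isAperiodic hM (f c)) _ _ _ rfl
    rw [← Set.insert_sdiff_self_of_mem hcB, valueLang_insert]
    exact (hB p).add <| .iSup fun t => (hB _).mul <|
      .mul (.blockLang (fun h => h.2 rfl) hB (hblock _)) (.mul (.single c) (hB _))

/-! ### Recognition by finite aperiodic monoids -/

section Recognition

variable {A : Type} {L : Set (List A)}

/-- `L` is the preimage of a subset of a finite aperiodic monoid under a morphism from the free
monoid, the empty word included. -/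
def RecognisedByAperiodicMonoid (L : Set (List A)) : Prop :=
  ∃ (M : Type) (_ : Monoid M) (_ : Finite M) (φ : FreeMonoid A →* M) (F : Set M),
    IsAperiodic M ∧ ∀ w, w ∈ L ↔ φ (FreeMonoid.ofList w) ∈ F

theorem RecognisedByAperiodicMonoid.starFree [Finite A] (hL : RecognisedByAperiodicMonoid L)
    (hne : [] ∉ L) : StarFree L := by
  obtain ⟨M, _, _, φ, F, hM, hφ⟩ := hL
  have hφ_prod (w : List A) : φ (FreeMonoid.ofList w) = (w.map fun a => φ (.of a)).prod := by
    rw [← FreeMonoid.lift_ofList]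
    exact (DFunLike.congr_fun (FreeMonoid.lift_restrict φ) _).symm
  convert (StarFreeWithNil.iSup fun p : F =>
    starFreeWithNil_valueLang hM (fun a => φ (.of a)) Set.univ p).toStarFree using 1
  ext w
  rw [Set.mem_ofPred_eq, Language.mem_iSup]
  constructor
  · intro hw
    exact ⟨fun h => hne (h ▸ hw), ⟨_, (hφ w).mp hw⟩, fun _ _ => Set.mem_univ _, (hφ_prod w).symm⟩
  · rintro ⟨-, p, -, hw⟩
    rw [hφ, hφ_prod, hw]
    exact p.2

theorem IsWordHom.lift_ofList {S : Type} [Semigroup S] {h : List A → S} (hh : IsWordHom h)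
    {w : List A} (hw : w ≠ []) :
    FreeMonoid.lift (fun a => (h [a] : WithOne S)) (FreeMonoid.ofList w) = h w := by
  induction w, hw using List.recNeNil with
  | singleton a => rfl
  | cons a w hw ih =>
    rw [FreeMonoid.ofList_cons, map_mul, ih, FreeMonoid.lift_eval_of, ← WithOne.coe_mul,
      ← hh _ _ (List.cons_ne_nil a []) hw, List.singleton_append]

theorem recognisedByAperiodicMonoid_iff_exists_semigroup (hne : [] ∉ L) :
    RecognisedByAperiodicMonoid L ↔
      ∃ (S : FinSemigroup) (h : List A → S.carrier) (F : Set S.carrier),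
        IsAperiodic S.carrier ∧ RecognisedBy h F L := by
  constructor
  · rintro ⟨M, _, _, φ, F, hM, hφ⟩
    refine ⟨⟨M⟩, fun w => φ (FreeMonoid.ofList w), F, hM, fun u v _ _ => map_mul φ _ _, ?_⟩
    ext w
    exact ⟨fun hw => ⟨fun h => hne (h ▸ hw), (hφ w).mp hw⟩, fun hw => (hφ w).mpr hw.2⟩
  · rintro ⟨S, h, F, hS, hh, rfl⟩
    refine ⟨WithOne S.carrier, inferInstance, inferInstanceAs (Finite (Option S.carrier)),
      FreeMonoid.lift fun a => (h [a] : WithOne S.carrier), (↑) '' F, hS.withOne, fun w => ?_⟩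
    rcases eq_or_ne w [] with rfl | hw
    · exact iff_of_false (fun h => h.1 rfl) fun ⟨_, _, h⟩ => WithOne.coe_ne_one h
    · rw [hh.lift_ofList hw, WithOne.coe_injective.mem_set_image]
      exact and_iff_right hw

end Recognition

/-! ### Counter-free automata -/

section CounterFree

variable {A : Type}

theorem ofList_wpow (w : List A) (n : ℕ) :
    FreeMonoid.ofList (wpow w n) = FreeMonoid.ofList w ^ n := by
  rw [wpow, FreeMonoid.ofList_flatten, List.map_replicate, List.prod_replicate]

/-- The automaton with state set `M` in which the letter `a` multiplies on the right by `φ a`. -/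
def homDFA {M : Type} [Monoid M] (φ : FreeMonoid A →* M) (F : Set M) : DFA A M where
  step m a := m * φ (.of a)
  start := 1
  accept := F

theorem homDFA_evalFrom {M : Type} [Monoid M] (φ : FreeMonoid A →* M) (F : Set M) (q : M)
    (w : List A) : (homDFA φ F).evalFrom q w = q * φ (FreeMonoid.ofList w) := by
  induction w generalizing q with
  | nil => exact (mul_one q).symm.trans (congrArg (q * ·) (map_one φ).symm)
  | cons a w ih =>
    rw [DFA.evalFrom_cons, ih, FreeMonoid.ofList_cons, map_mul, ← mul_assoc]
    rfl

theorem IsAperiodic.mul_eq_self_of_mul_pow_eq_self {M : Type} [Monoid M] (hM : IsAperiodic M)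
    {q x : M} {n : ℕ} (hn : n ≠ 0) (h : q * x ^ n = q) : q * x = q := by
  obtain ⟨N, hN⟩ := isAperiodic_iff_pow.mp hM
  have hpow (k : ℕ) : q * x ^ (n * k) = q := by
    induction k with
    | zero => rw [mul_zero, pow_zero, mul_one]
    | succ k ih => rw [mul_add_one, pow_add, ← mul_assoc, ih, h]
  obtain ⟨d, hd⟩ := Nat.exists_eq_add_of_le (Nat.le_mul_of_pos_left N (Nat.pos_of_ne_zero hn))
  calc
    q * x = q * x ^ (n * N) * x := by rw [hpow]
    _ = q * x ^ (N + 1 + d) := by rw [mul_assoc, ← pow_succ, hd, Nat.add_right_comm]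
    _ = q * x ^ (n * N) := by rw [pow_add, ← hN, ← pow_add, ← hd]
    _ = q := hpow N

theorem isCounterFree_homDFA {M : Type} [Monoid M] (hM : IsAperiodic M) (φ : FreeMonoid A →* M)
    (F : Set M) : IsCounterFree (homDFA φ F) := by
  rintro ⟨q, w, n, -, hn, hne, h⟩
  rw [homDFA_evalFrom] at hne h
  rw [ofList_wpow, map_pow] at h
  exact hne (hM.mul_eq_self_of_mul_pow_eq_self (Nat.ne_zero_of_lt hn) h)

variable {σ : Type} {M : DFA A σ}

/-- The transition functions `δ_w` of an automaton; the opposite of `Function.End σ` makes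
`w ↦ δ_w` multiplicative. -/
def transitionHom (M : DFA A σ) : FreeMonoid A →* (Function.End σ)ᵐᵒᵖ where
  toFun w := .op fun q => M.evalFrom q w.toList
  map_one' := rfl
  map_mul' u v := congrArg MulOpposite.op (funext fun q => M.evalFrom_of_append q u.toList v.toList)

instance [Finite σ] : Finite (Function.End σ)ᵐᵒᵖ :=
  .of_equiv (σ → σ) (MulOpposite.opEquiv (α := Function.End σ))

theorem transitionHom_pow_apply (w : List A) (n : ℕ) (q : σ) :
    (transitionHom M (FreeMonoid.ofList w) ^ n).unop q = M.evalFrom q (wpow w n) := by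
  rw [← map_pow, ← ofList_wpow]
  rfl

theorem IsCounterFree.evalFrom_eq_self (hM : IsCounterFree M) {q : σ} {w : List A} {n : ℕ}
    (hn : n ≠ 0) (h : M.evalFrom q (wpow w n) = q) : M.evalFrom q w = q := by
  rcases eq_or_ne w [] with rfl | hw
  · rfl
  rcases (Nat.one_le_iff_ne_zero.mpr hn).eq_or_lt with rfl | hn
  · simpa [wpow] using h
  · by_contra hne
    exact hM ⟨q, w, n, hw, hn, hne, h⟩

theorem IsCounterFree.exists_transitionHom_pow_eq [Finite σ] (hM : IsCounterFree M) (w : List A) :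
    ∃ n : ℕ, transitionHom M (FreeMonoid.ofList w) ^ n =
      transitionHom M (FreeMonoid.ofList w) ^ (n + 1) := by
  set x := transitionHom M (FreeMonoid.ofList w)
  obtain ⟨i, j, hij, hx⟩ : ∃ i j, i < j ∧ x ^ i = x ^ j :=
    (Set.finite_univ (α := (Function.End σ)ᵐᵒᵖ)).exists_lt_map_eq_of_forall_mem
      fun _ => Set.mem_univ _
  obtain ⟨d, rfl⟩ := Nat.exists_eq_add_of_le hij.le
  refine ⟨i, MulOpposite.unop_injective (funext fun q => ?_)⟩
  have hcycle : M.evalFrom ((x ^ i).unop q) (wpow w d) = (x ^ i).unop q := by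
    rw [← transitionHom_pow_apply]
    exact congrFun (congrArg MulOpposite.unop ((pow_add x i d).symm.trans hx.symm)) q
  calc
    (x ^ i).unop q = M.evalFrom ((x ^ i).unop q) w :=
      (hM.evalFrom_eq_self (by omega) hcycle).symm
    _ = (x ^ (i + 1)).unop q := congrFun (congrArg MulOpposite.unop (pow_succ x i).symm) q

theorem recognisedByAperiodicMonoid_iff_exists_dfa {L : Set (List A)} :
    RecognisedByAperiodicMonoid L ↔
      ∃ (σ : Type) (_ : Fintype σ) (M : DFA A σ), IsCounterFree M ∧ M.accepts = L := by
  constructor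
  · rintro ⟨M, _, _, φ, F, hM, hφ⟩
    refine ⟨M, .ofFinite M, homDFA φ F, isCounterFree_homDFA hM φ F, ?_⟩
    ext w
    change (homDFA φ F).evalFrom 1 w ∈ F ↔ w ∈ L
    rw [homDFA_evalFrom, one_mul, hφ]
  · rintro ⟨σ, _, M, hM, rfl⟩
    refine ⟨MonoidHom.mrange (transitionHom M), inferInstance, inferInstance,
      (transitionHom M).mrangeRestrict, {x | x.1.unop M.start ∈ M.accept}, ?_, fun w => Iff.rfl⟩
    refine isAperiodic_of_forall_exists ?_
    rintro ⟨_, w, rfl⟩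
    obtain ⟨n, hn⟩ := hM.exists_transitionHom_pow_eq w.toList
    exact ⟨n, Subtype.ext hn⟩

end CounterFree

/-! ### Ehrenfeucht–Fraïssé types -/

section RankType

open scoped List

variable {B C : Type} {k l : ℕ} {u u' v v' : List B}

/-- Ehrenfeucht–Fraïssé types of rank `k` of words over `B`. A type of rank `k + 1` records, for
each position that can be played first, its letter and the types of rank `k` of the two factors on
either side of it. -/
def RankType (B : Type) : ℕ → Type
  | 0 => Unit
  | k + 1 => Set (RankType B k × B × RankType B k)

instance RankType.finite [Finite B] : (k : ℕ) → Finite (RankType B k)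
  | 0 => inferInstanceAs (Finite Unit)
  | k + 1 =>
    have := RankType.finite k
    inferInstanceAs (Finite (Set (RankType B k × B × RankType B k)))

/-- The Ehrenfeucht–Fraïssé type of rank `k` of a word. -/
def rankType : (k : ℕ) → List B → RankType B k
  | 0, _ => ()
  | k + 1, w => {t : RankType B k × B × RankType B k |
      ∃ u b v, w = u ++ b :: v ∧ t = (rankType k u, b, rankType k v)}

/-- One direction of the back-and-forth condition for equality of types of rank `k + 1`: each move
in `u` is answered by a move in `v`. -/
def RankTypeForth (k : ℕ) (u v : List B) : Prop :=
  ∀ u₁ b u₂, u = u₁ ++ b :: u₂ →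
    ∃ v₁ v₂, v = v₁ ++ b :: v₂ ∧ rankType k u₁ = rankType k v₁ ∧ rankType k u₂ = rankType k v₂

theorem rankType_succ_eq_iff :
    rankType (k + 1) u = rankType (k + 1) v ↔ RankTypeForth k u v ∧ RankTypeForth k v u := by
  have forth_iff_subset (u v : List B) : RankTypeForth k u v ↔
      {t | ∃ u₁ b u₂, u = u₁ ++ b :: u₂ ∧ t = (rankType k u₁, b, rankType k u₂)} ⊆
        {t | ∃ v₁ b v₂, v = v₁ ++ b :: v₂ ∧ t = (rankType k v₁, b, rankType k v₂)} := by
    constructor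
    · rintro h _ ⟨u₁, b, u₂, hu, rfl⟩
      obtain ⟨v₁, v₂, hv, h₁, h₂⟩ := h u₁ b u₂ hu
      exact ⟨v₁, b, v₂, hv, by rw [h₁, h₂]⟩
    · intro h u₁ b u₂ hu
      obtain ⟨v₁, _, v₂, hv, heq⟩ := h ⟨u₁, b, u₂, hu, rfl⟩
      simp only [Prod.mk.injEq] at heq
      obtain ⟨h₁, rfl, h₂⟩ := heq
      exact ⟨v₁, v₂, hv, h₁, h₂⟩
  rw [forth_iff_subset, forth_iff_subset]
  exact Set.Subset.antisymm_iff

theorem rankType_eq_of_succ (h : rankType (k + 1) u = rankType (k + 1) v) :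
    rankType k u = rankType k v := by
  induction k generalizing u v with
  | zero => rfl
  | succ k ih =>
    have forth_of_succ {u v : List B} (h : RankTypeForth (k + 1) u v) : RankTypeForth k u v := by
      intro u₁ b u₂ hu
      obtain ⟨v₁, v₂, hv, h₁, h₂⟩ := h u₁ b u₂ hu
      exact ⟨v₁, v₂, hv, ih h₁, ih h₂⟩
    exact rankType_succ_eq_iff.mpr ((rankType_succ_eq_iff.mp h).imp forth_of_succ forth_of_succ)

theorem rankType_eq_of_le (hkl : k ≤ l) (h : rankType l u = rankType l v) :
    rankType k u = rankType k v := by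
  induction l, hkl using Nat.le_induction with
  | base => exact h
  | succ l _ ih => exact ih (rankType_eq_of_succ h)

theorem append_eq_append_cons_iff {b : B} {w₁ w₂ : List B} :
    u ++ v = w₁ ++ b :: w₂ ↔
      (∃ t, u = w₁ ++ b :: t ∧ w₂ = t ++ v) ∨ ∃ t, w₁ = u ++ t ∧ v = t ++ b :: w₂ := by
  rw [List.append_eq_append_iff]
  constructor
  · rintro (h | ⟨_ | ⟨c, t⟩, rfl, h⟩)
    · exact .inr h
    · exact .inr ⟨[], by simp, h.symm⟩
    · obtain ⟨rfl, rfl⟩ := List.cons_eq_cons.mp h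
      exact .inl ⟨t, rfl, rfl⟩
  · rintro (⟨t, rfl, rfl⟩ | h)
    · exact .inr ⟨b :: t, rfl, rfl⟩
    · exact .inl h

theorem rankType_append_congr (hu : rankType k u = rankType k u')
    (hv : rankType k v = rankType k v') : rankType k (u ++ v) = rankType k (u' ++ v') := by
  induction k generalizing u u' v v' with
  | zero => rfl
  | succ k ih =>
    have forth {u u' v v' : List B} (hu : rankType (k + 1) u = rankType (k + 1) u')
        (hv : rankType (k + 1) v = rankType (k + 1) v') :
        RankTypeForth k (u ++ v) (u' ++ v') := by
      intro w₁ b w₂ hw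
      rcases append_eq_append_cons_iff.mp hw with ⟨t, htu, rfl⟩ | ⟨t, rfl, htv⟩
      · obtain ⟨u₁, u₂, rfl, h₁, h₂⟩ := (rankType_succ_eq_iff.mp hu).1 _ _ _ htu
        exact ⟨u₁, u₂ ++ v', List.append_assoc _ _ _, h₁, ih h₂ (rankType_eq_of_succ hv)⟩
      · obtain ⟨v₁, v₂, rfl, h₁, h₂⟩ := (rankType_succ_eq_iff.mp hv).1 _ _ _ htv
        exact ⟨u' ++ v₁, v₂, (List.append_assoc _ _ _).symm, ih (rankType_eq_of_succ hu) h₁, h₂⟩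
    exact rankType_succ_eq_iff.mpr ⟨forth hu hv, forth hu.symm hv.symm⟩

theorem rankType_map_congr (f : B → C) (h : rankType k u = rankType k v) :
    rankType k (u.map f) = rankType k (v.map f) := by
  induction k generalizing u v with
  | zero => rfl
  | succ k ih =>
    have forth {u v : List B} (h : RankTypeForth k u v) :
        RankTypeForth k (u.map f) (v.map f) := by
      intro _ _ _ hu
      obtain ⟨u₁, u', rfl, rfl, hu'⟩ := List.map_eq_append_iff.mp hu
      obtain ⟨b, u₂, rfl, rfl, rfl⟩ := List.map_eq_cons_iff.mp hu'
      obtain ⟨v₁, v₂, rfl, h₁, h₂⟩ := h u₁ b u₂ rfl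
      exact ⟨_, _, List.map_append, ih h₁, ih h₂⟩
    exact rankType_succ_eq_iff.mpr ((rankType_succ_eq_iff.mp h).imp forth forth)

theorem sublist_iff_of_rankType_eq {s : List B}
    (h : rankType s.length u = rankType s.length v) : s <+ u ↔ s <+ v := by
  induction s generalizing u v with
  | nil => simp
  | cons b s ih =>
    have forth {u v : List B} (h : RankTypeForth s.length u v) (hbs : b :: s <+ u) :
        b :: s <+ v := by
      obtain ⟨u₁, u', rfl, hb, hs⟩ := List.cons_sublist_iff.mp hbs
      obtain ⟨r₁, r₂, rfl⟩ := List.append_of_mem hb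
      obtain ⟨v₁, v₂, rfl, -, h₂⟩ := h r₁ b (r₂ ++ u') (by simp)
      have hs₂ : s <+ v₂ := (ih h₂).mp (hs.trans (List.sublist_append_right _ _))
      exact (hs₂.cons_cons b).trans (List.sublist_append_right _ _)
    have h := rankType_succ_eq_iff.mp h
    exact ⟨forth h.1, forth h.2⟩

theorem wpow_succ (w : List B) (n : ℕ) : wpow w (n + 1) = w ++ wpow w n := by
  rw [wpow, List.replicate_succ, List.flatten_cons, wpow]

theorem wpow_add (w : List B) (m n : ℕ) : wpow w (m + n) = wpow w m ++ wpow w n := by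
  rw [wpow, List.replicate_add, List.flatten_append, wpow, wpow]

theorem exists_of_wpow_eq_append_cons {n : ℕ} {b : B} {w₁ w₂ : List B}
    (h : wpow u n = w₁ ++ b :: w₂) :
    ∃ i j p q, i + j + 1 = n ∧ u = p ++ b :: q ∧ w₁ = wpow u i ++ p ∧ w₂ = q ++ wpow u j := by
  induction n generalizing w₁ with
  | zero => simp [wpow] at h
  | succ n ih =>
    rw [wpow_succ] at h
    rcases append_eq_append_cons_iff.mp h with ⟨t, hu, hw₂⟩ | ⟨t, rfl, ht⟩
    · exact ⟨0, n, w₁, t, by omega, hu, rfl, hw₂⟩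
    · obtain ⟨i, j, p, q, rfl, hu, rfl, hw₂⟩ := ih ht
      exact ⟨i + 1, j, p, q, by omega, hu, by rw [wpow_succ, List.append_assoc], hw₂⟩

theorem rankTypeForth_wpow {m n : ℕ}
    (h : ∀ i j, i + j + 1 = m → ∃ i' j', i' + j' + 1 = n ∧
      rankType k (wpow u i) = rankType k (wpow u i') ∧
      rankType k (wpow u j) = rankType k (wpow u j')) :
    RankTypeForth k (wpow u m) (wpow u n) := by
  intro w₁ b w₂ hw
  obtain ⟨i, j, p, q, hij, rfl, rfl, rfl⟩ := exists_of_wpow_eq_append_cons hw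
  obtain ⟨i', j', rfl, hi, hj⟩ := h i j hij
  refine ⟨_, _, ?_, rankType_append_congr hi rfl, rankType_append_congr rfl hj⟩
  rw [Nat.add_assoc, wpow_add, wpow_succ]
  simp only [List.append_assoc, List.cons_append]

/-- A move in a power of `u` selects a position of one copy of `u`; the answer is the same position,
with one more or one less copy on the longer side. -/
theorem rankType_wpow_eq_succ {n : ℕ} (hn : 2 ^ k ≤ n + 1) (u : List B) :
    rankType k (wpow u n) = rankType k (wpow u (n + 1)) := by
  induction k generalizing n with
  | zero => rfl
  | succ k ih =>
    rw [pow_succ] at hn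
    have hk : 0 < 2 ^ k := by positivity
    refine rankType_succ_eq_iff.mpr ⟨rankTypeForth_wpow ?_, rankTypeForth_wpow ?_⟩ <;>
      intro i j hij
    · rcases Nat.lt_or_ge i j with h | h
      · exact ⟨i, j + 1, by omega, rfl, ih (by omega)⟩
      · exact ⟨i + 1, j, by omega, ih (by omega), rfl⟩
    · rcases Nat.lt_or_ge i j with h | h
      · obtain ⟨j, rfl⟩ := Nat.exists_eq_add_one_of_ne_zero (Nat.ne_zero_of_lt h)
        exact ⟨i, j, by omega, rfl, (ih (by omega)).symm⟩
      · obtain ⟨i, rfl⟩ := Nat.exists_eq_add_one_of_ne_zero (n := i) (by omega)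
        exact ⟨i, j, by omega, (ih (by omega)).symm, rfl⟩

/-- Equality of types of rank `k`, as a congruence on words. -/
def rankCon (B : Type) (k : ℕ) : Con (FreeMonoid B) where
  r u v := rankType k u.toList = rankType k v.toList
  iseqv := ⟨fun _ => rfl, Eq.symm, Eq.trans⟩
  mul' := rankType_append_congr

instance [Finite B] : Finite (rankCon B k).Quotient :=
  .of_injective (fun x => Con.liftOn x (fun w => rankType k w.toList) fun _ _ => id)
    fun x y => Con.induction_on₂ x y fun _ _ h => (Con.eq _).mpr h

theorem isAperiodic_rankCon : IsAperiodic (rankCon B k).Quotient := by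
  refine isAperiodic_iff_pow.mpr ⟨2 ^ k, fun x => ?_⟩
  induction x using Con.induction_on with
  | H w =>
    have h : rankCon B k (FreeMonoid.ofList (wpow w.toList (2 ^ k)))
        (FreeMonoid.ofList (wpow w.toList (2 ^ k + 1))) := rankType_wpow_eq_succ (Nat.le_succ _) _
    rw [ofList_wpow, ofList_wpow] at h
    exact (Con.eq _).mpr h

theorem recognisedByAperiodicMonoid_of_rankType [Finite B] {L : Set (List B)} (k : ℕ)
    (hL : ∀ u v, rankType k u = rankType k v → u ∈ L → v ∈ L) : RecognisedByAperiodicMonoid L := by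
  refine ⟨(rankCon B k).Quotient, inferInstance, inferInstance, (rankCon B k).mk',
    {x | ∃ u ∈ L, (rankCon B k).mk' (FreeMonoid.ofList u) = x}, isAperiodic_rankCon, fun w => ?_⟩
  exact ⟨fun hw => ⟨w, hw, rfl⟩, fun ⟨u, hu, h⟩ => hL u w ((Con.eq _).mp h) hu⟩

end RankType

/-! ### First-order formulas and types -/

section FirstOrderToAperiodic

open scoped List

attribute [local instance] wordStructure

variable {A : Type} {n k : ℕ} {w v : List A} {a : Fin n → Fin w.length} {b : Fin n → Fin v.length}

/-- The letter at position `i` together with the set of variables that `a` assigns to `i`. -/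
def markedLetter (w : List A) (a : Fin n → Fin w.length) (i : Fin w.length) :
    A × (Fin n → Prop) :=
  (w.get i, fun x => a x = i)

/-- The word `w` with each position marked by the variables assigned to it. It encodes the pair
of a word and an assignment as a single word. -/
def markedWord (w : List A) (a : Fin n → Fin w.length) : List (A × (Fin n → Prop)) :=
  (List.finRange w.length).map (markedLetter w a)

theorem mem_markedWord {c : A × (Fin n → Prop)} :
    c ∈ markedWord w a ↔ ∃ i, markedLetter w a i = c := by
  simp [markedWord]

theorem pair_sublist_markedWord {c d : A × (Fin n → Prop)} :
    [c, d] <+ markedWord w a ↔ ∃ i j, i < j ∧ markedLetter w a i = c ∧ markedLetter w a j = d := by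
  rw [markedWord, List.sublist_map_iff]
  constructor
  · rintro ⟨l, hl, hcd⟩
    obtain ⟨i, l, rfl, rfl, hd⟩ := List.map_eq_cons_iff.mp hcd.symm
    obtain ⟨j, rfl, rfl⟩ := List.map_eq_singleton_iff.mp hd
    exact ⟨i, j, List.pairwise_pair.mp ((List.pairwise_lt_finRange _).sublist hl), rfl, rfl⟩
  · rintro ⟨i, j, hij, rfl, rfl⟩
    refine ⟨[i, j], List.sublist_of_subperm_of_pairwise (r := (· < ·)) ?_
      (List.pairwise_pair.mpr hij) (List.pairwise_lt_finRange _), rfl⟩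
    exact (List.nodup_cons.mpr ⟨by simpa using hij.ne, List.nodup_singleton j⟩).subperm
      fun _ _ => List.mem_finRange _

theorem apply_eq_apply_iff_of_rankType_eq
    (h : rankType 1 (markedWord w a) = rankType 1 (markedWord v b)) (x y : Fin n) :
    a x = a y ↔ b x = b y := by
  have key {w : List A} (a : Fin n → Fin w.length) :
      a x = a y ↔ ∃ c, c.2 x ∧ c.2 y ∧ [c] <+ markedWord w a := by
    simp [mem_markedWord, markedLetter, eq_comm]
  have singleton_sublist_iff (c) : [c] <+ markedWord w a ↔ [c] <+ markedWord v b :=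
    sublist_iff_of_rankType_eq h
  simp only [key, singleton_sublist_iff]

theorem get_eq_iff_of_rankType_eq
    (h : rankType 1 (markedWord w a) = rankType 1 (markedWord v b)) (x : Fin n) (l : A) :
    w.get (a x) = l ↔ v.get (b x) = l := by
  have key {w : List A} (a : Fin n → Fin w.length) :
      w.get (a x) = l ↔ ∃ c, c.1 = l ∧ c.2 x ∧ [c] <+ markedWord w a := by
    simp [mem_markedWord, markedLetter]
  have singleton_sublist_iff (c) : [c] <+ markedWord w a ↔ [c] <+ markedWord v b :=
    sublist_iff_of_rankType_eq h
  simp only [key, singleton_sublist_iff]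

theorem lt_iff_of_rankType_eq
    (h : rankType 2 (markedWord w a) = rankType 2 (markedWord v b)) (x y : Fin n) :
    a x < a y ↔ b x < b y := by
  have key {w : List A} (a : Fin n → Fin w.length) :
      a x < a y ↔ ∃ c d, c.2 x ∧ d.2 y ∧ [c, d] <+ markedWord w a := by
    simp [pair_sublist_markedWord, markedLetter]
  have pair_sublist_iff (c d) : [c, d] <+ markedWord w a ↔ [c, d] <+ markedWord v b :=
    sublist_iff_of_rankType_eq h
  simp only [key, pair_sublist_iff]

/-- Adds a last variable to a marked letter, which is assigned to this letter if `P` holds. -/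
def extendMark (P : Prop) (c : A × (Fin n → Prop)) : A × (Fin (n + 1) → Prop) :=
  (c.1, Fin.snoc c.2 P)

theorem markedLetter_snoc (p i : Fin w.length) :
    markedLetter w (Fin.snoc a p : Fin (n + 1) → Fin w.length) i =
      extendMark (p = i) (markedLetter w a i) := by
  refine Prod.ext rfl (funext fun x => ?_)
  induction x using Fin.lastCases <;> simp [markedLetter, extendMark]

theorem markedWord_snoc {p : Fin w.length} {r₁ r₂ : List (Fin w.length)}
    (h : List.finRange w.length = r₁ ++ p :: r₂) :
    markedWord w (Fin.snoc a p : Fin (n + 1) → Fin w.length) =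
      (r₁.map (markedLetter w a)).map (extendMark False) ++
        extendMark True (markedLetter w a p) ::
          (r₂.map (markedLetter w a)).map (extendMark False) := by
  have hp : p ∉ r₁ ++ r₂ :=
    (List.nodup_cons.mp (List.nodup_middle.mp (h ▸ List.nodup_finRange w.length))).1
  have map_snoc {r : List (Fin w.length)} (hr : p ∉ r) :
      r.map (markedLetter w (Fin.snoc a p : Fin (n + 1) → Fin w.length)) =
        (r.map (markedLetter w a)).map (extendMark False) := by
    rw [List.map_map]
    refine List.map_congr_left fun i hi => ?_
    rw [markedLetter_snoc, eq_false (ne_of_mem_of_not_mem hi hr).symm, Function.comp_apply]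
  rw [List.mem_append, not_or] at hp
  rw [markedWord, h, List.map_append, List.map_cons, map_snoc hp.1, map_snoc hp.2,
    markedLetter_snoc, eq_self]

theorem exists_rankType_snoc_eq
    (h : rankType (k + 1) (markedWord w a) = rankType (k + 1) (markedWord v b))
    (p : Fin w.length) :
    ∃ q : Fin v.length,
      rankType k (markedWord w (Fin.snoc a p : Fin (n + 1) → Fin w.length)) =
        rankType k (markedWord v (Fin.snoc b q : Fin (n + 1) → Fin v.length)) := by
  obtain ⟨r₁, r₂, hr⟩ := List.append_of_mem (List.mem_finRange p)
  obtain ⟨v₁, v₂, hv, h₁, h₂⟩ := (rankType_succ_eq_iff.mp h).1 (r₁.map (markedLetter w a))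
    (markedLetter w a p) (r₂.map (markedLetter w a)) (by rw [markedWord, hr]; simp)
  obtain ⟨s₁, s, hs, rfl, hs'⟩ := List.map_eq_append_iff.mp hv
  obtain ⟨q, s₂, rfl, hq, rfl⟩ := List.map_eq_cons_iff.mp hs'
  refine ⟨q, ?_⟩
  rw [markedWord_snoc hr, markedWord_snoc hs, hq]
  exact rankType_append_congr (rankType_map_congr _ h₁)
    (rankType_append_congr (u := [_]) (u' := [_]) rfl (rankType_map_congr _ h₂))

theorem exists_term_eq_var (t : (wordLang A).Term (Empty ⊕ Fin n)) : ∃ x, t = .var (.inr x) := by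
  cases t with
  | var x =>
    rcases x with x | x
    · exact x.elim
    · exact ⟨x, rfl⟩
  | func f _ => exact Empty.elim f

theorem exists_rankType_realize_rel_iff {l : ℕ} (R : (wordLang A).Relations l)
    (ts : Fin l → (wordLang A).Term (Empty ⊕ Fin n)) :
    ∃ k, ∀ (w v : List A) (a : Fin n → Fin w.length) (b : Fin n → Fin v.length),
      rankType k (markedWord w a) = rankType k (markedWord v b) →
        ((R.boundedFormula ts).Realize default a ↔ (R.boundedFormula ts).Realize default b) := by
  match l, R with
  | 0, R => exact Empty.elim R
  | 1, R =>
    obtain ⟨x, hx⟩ := exists_term_eq_var (ts 0)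
    refine ⟨1, fun w v a b h => ?_⟩
    change w.get ((ts 0).realize _) = R ↔ v.get ((ts 0).realize _) = R
    rw [hx]
    exact get_eq_iff_of_rankType_eq h x R
  | 2, R =>
    obtain ⟨x, hx⟩ := exists_term_eq_var (ts 0)
    obtain ⟨y, hy⟩ := exists_term_eq_var (ts 1)
    refine ⟨2, fun w v a b h => ?_⟩
    change (ts 0).realize _ < (ts 1).realize _ ↔ (ts 0).realize _ < (ts 1).realize _
    rw [hx, hy]
    exact lt_iff_of_rankType_eq h x y
  | _ + 3, R => exact Empty.elim R

theorem exists_rankType_realize_iff (φ : (wordLang A).BoundedFormula Empty n) :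
    ∃ k, ∀ (w v : List A) (a : Fin n → Fin w.length) (b : Fin n → Fin v.length),
      rankType k (markedWord w a) = rankType k (markedWord v b) →
        (φ.Realize default a ↔ φ.Realize default b) := by
  induction φ with
  | falsum => exact ⟨0, fun _ _ _ _ _ => Iff.rfl⟩
  | equal t₁ t₂ =>
    obtain ⟨x, rfl⟩ := exists_term_eq_var t₁
    obtain ⟨y, rfl⟩ := exists_term_eq_var t₂
    exact ⟨1, fun _ _ _ _ h => apply_eq_apply_iff_of_rankType_eq h x y⟩
  | rel R ts => exact exists_rankType_realize_rel_iff R ts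
  | imp φ ψ ihφ ihψ =>
    obtain ⟨k, hk⟩ := ihφ
    obtain ⟨l, hl⟩ := ihψ
    refine ⟨max k l, fun w v a b h => imp_congr ?_ ?_⟩
    · exact hk w v a b (rankType_eq_of_le (le_max_left k l) h)
    · exact hl w v a b (rankType_eq_of_le (le_max_right k l) h)
  | all φ ih =>
    obtain ⟨k, hk⟩ := ih
    refine ⟨k + 1, fun w v a b h => ⟨fun hφ q => ?_, fun hφ p => ?_⟩⟩
    · obtain ⟨p, hp⟩ := exists_rankType_snoc_eq h.symm q
      exact (hk _ _ _ _ hp).mpr (hφ p)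
    · obtain ⟨q, hq⟩ := exists_rankType_snoc_eq h p
      exact (hk _ _ _ _ hq).mpr (hφ q)

theorem markedWord_of_isEmpty (w : List A) (a : Fin 0 → Fin w.length) :
    markedWord w a = w.map fun c => (c, Fin.elim0) := by
  have markedLetter_eq (i : Fin w.length) : markedLetter w a i = (w.get i, Fin.elim0) :=
    Prod.ext rfl (Subsingleton.elim _ _)
  rw [markedWord, funext markedLetter_eq]
  conv_rhs => rw [← w.map_get_finRange, List.map_map]
  rfl

theorem FODefinable.recognisedByAperiodicMonoid [Finite A] {L : Set (List A)}
    (hL : FODefinable L) : RecognisedByAperiodicMonoid L := by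
  obtain ⟨θ, rfl⟩ := hL
  obtain ⟨k, hk⟩ := exists_rankType_realize_iff θ
  refine recognisedByAperiodicMonoid_of_rankType (k + 1) fun u v huv ⟨hu, hθ⟩ => ⟨?_, ?_⟩
  · obtain ⟨b, u, rfl⟩ := List.exists_cons_of_ne_nil hu
    obtain ⟨v₁, v₂, rfl, -, -⟩ := (rankType_succ_eq_iff.mp huv).1 [] b u rfl
    simp
  · refine (hk u v default default ?_).mp hθ
    rw [markedWord_of_isEmpty, markedWord_of_isEmpty]
    exact rankType_map_congr _ (rankType_eq_of_succ huv)

end FirstOrderToAperiodic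

/-! ### From star-free languages to first-order sentences -/

section StarFreeToFirstOrder

open FirstOrder.Language

attribute [local instance] wordStructure

variable {A α β : Type}

/-- A property of assignments `α → Fin w.length` in words `w` is first-order expressible if one
formula with free variables in `α` defines it in every word. -/
def FOExpressible (P : ∀ w : List A, (α → Fin w.length) → Prop) : Prop :=
  ∃ φ : (wordLang A).Formula α, ∀ (w : List A) (v : α → Fin w.length), φ.Realize v ↔ P w v

namespace FOExpressible

variable {P Q : ∀ w : List A, (α → Fin w.length) → Prop}

theorem congr (hP : FOExpressible P) (h : ∀ w v, P w v ↔ Q w v) : FOExpressible Q :=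
  let ⟨φ, hφ⟩ := hP
  ⟨φ, fun w v => (hφ w v).trans (h w v)⟩

theorem not (hP : FOExpressible P) : FOExpressible fun w v => ¬ P w v :=
  let ⟨φ, hφ⟩ := hP
  ⟨φ.not, fun w v => Formula.realize_not.trans (hφ w v).not⟩

theorem and (hP : FOExpressible P) (hQ : FOExpressible Q) :
    FOExpressible fun w v => P w v ∧ Q w v :=
  let ⟨φ, hφ⟩ := hP
  let ⟨ψ, hψ⟩ := hQ
  ⟨φ ⊓ ψ, fun w v => Formula.realize_inf.trans (and_congr (hφ w v) (hψ w v))⟩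

theorem or (hP : FOExpressible P) (hQ : FOExpressible Q) :
    FOExpressible fun w v => P w v ∨ Q w v :=
  let ⟨φ, hφ⟩ := hP
  let ⟨ψ, hψ⟩ := hQ
  ⟨φ ⊔ ψ, fun w v => Formula.realize_sup.trans (or_congr (hφ w v) (hψ w v))⟩

theorem relabel (g : α → β) (hP : FOExpressible P) : FOExpressible fun w v => P w (v ∘ g) :=
  let ⟨φ, hφ⟩ := hP
  ⟨φ.relabel g, fun w v => Formula.realize_relabel.trans (hφ w (v ∘ g))⟩

theorem exists_sumElim {P : ∀ w : List A, (α ⊕ Unit → Fin w.length) → Prop}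
    (hP : FOExpressible P) :
    FOExpressible fun w v => ∃ x, P w (Sum.elim v fun _ => x) :=
  let ⟨φ, hφ⟩ := hP
  ⟨φ.iExs Unit, fun w _ => (Formula.realize_iExs ..).trans
    ⟨fun ⟨x, hx⟩ => ⟨x (), (hφ w _).mp hx⟩, fun ⟨x, hx⟩ => ⟨fun _ => x, (hφ w _).mpr hx⟩⟩⟩

theorem lt (x y : α) : FOExpressible (A := A) fun _ v => v x < v y :=
  ⟨Relations.formula₂ (L := wordLang A) (show (wordLang A).Relations 2 from ()) (.var x) (.var y),
    fun _ _ => Formula.realize_rel₂⟩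

theorem get_eq (x : α) (c : A) : FOExpressible fun w v => w.get (v x) = c :=
  ⟨Relations.formula₁ (L := wordLang A) (show (wordLang A).Relations 1 from c) (.var x),
    fun _ _ => Formula.realize_rel₁⟩

theorem eq (x y : α) : FOExpressible (A := A) fun _ v => v x = v y :=
  ((lt x y).not.and (lt y x).not).congr fun _ _ => by
    rw [not_lt, not_lt, and_comm, ← le_antisymm_iff]

theorem val_eq_succ (x y : α) :
    FOExpressible (A := A) fun _ v => (v y : ℕ) = v x + 1 := by
  have hbetween : FOExpressible fun (w : List A) (v : α → Fin w.length) =>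
      ∃ z, v x < z ∧ z < v y :=
    exists_sumElim (P := fun _ v => v (.inl x) < v (.inr ()) ∧ v (.inr ()) < v (.inl y))
      ((lt _ _).and (lt _ _))
  refine ((lt x y).and hbetween.not).congr fun _ v => ⟨fun ⟨_, hz⟩ => ?_, fun h => ?_⟩
  · by_contra h
    exact hz ⟨⟨v x + 1, by lia⟩, Fin.lt_def.mpr (Nat.lt_succ_self _), Fin.lt_def.mpr (by grind)⟩
  · exact ⟨Fin.lt_def.mpr (by lia), fun ⟨z, hxz, hzy⟩ => by lia⟩

theorem val_eq_zero (x : α) : FOExpressible (A := A) fun _ v => (v x : ℕ) = 0 := by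
  have hbelow : FOExpressible fun (w : List A) (v : α → Fin w.length) => ∃ z, z < v x :=
    exists_sumElim (P := fun _ v => v (.inr ()) < v (.inl x)) (lt _ _)
  refine hbelow.not.congr fun _ v => ⟨fun h => ?_, fun h ⟨z, hz⟩ => by lia⟩
  by_contra hx
  exact h ⟨⟨0, by lia⟩, Fin.lt_def.mpr (Nat.pos_of_ne_zero hx)⟩

theorem val_add_one_eq_length (x : α) :
    FOExpressible fun (w : List A) v => (v x : ℕ) + 1 = w.length := by
  have habove : FOExpressible fun (w : List A) (v : α → Fin w.length) => ∃ z, v x < z :=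
    exists_sumElim (P := fun _ v => v (.inl x) < v (.inr ())) (lt _ _)
  refine habove.not.congr fun w v => ⟨fun h => ?_, fun h ⟨z, hz⟩ => by lia⟩
  by_contra hx
  exact h ⟨⟨v x + 1, by lia⟩, Fin.lt_def.mpr (Nat.lt_succ_self _)⟩

end FOExpressible

/-- The factor of the word `w` between the positions `i` and `j`, both included. -/
def factor (w : List A) (i j : ℕ) : List A := (w.take (j + 1)).drop i

theorem length_factor {w : List A} {j : ℕ} (hj : j < w.length) (i : ℕ) :
    (factor w i j).length = j + 1 - i := by
  rw [factor, List.length_drop, List.length_take, min_eq_left (Nat.succ_le_of_lt hj)]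

theorem factor_ne_nil_iff {w : List A} {j : ℕ} (hj : j < w.length) (i : ℕ) :
    factor w i j ≠ [] ↔ i ≤ j := by
  rw [← List.length_pos_iff, length_factor hj]
  lia

theorem factor_append_factor {w : List A} {i k : ℕ} (hik : i ≤ k + 1) (hk : k < w.length)
    {j : ℕ} (hkj : k ≤ j) : factor w i k ++ factor w (k + 1) j = factor w i j := by
  have take_eq : w.take (k + 1) = (w.take (j + 1)).take (k + 1) := by
    rw [List.take_take, min_eq_left (Nat.succ_le_succ hkj)]
  rw [factor, factor, factor, take_eq, ← List.drop_append_of_le_length, List.take_append_drop]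
  rw [← take_eq, List.length_take]
  lia

theorem factor_eq_singleton_iff {w : List A} {i j : Fin w.length} {c : A} :
    factor w i j = [c] ↔ i = j ∧ w.get i = c := by
  have factor_self : factor w i i = [w.get i] := by
    rw [factor, List.take_succ_eq_append_getElem i.2,
      List.drop_left' (List.length_take_of_le i.2.le)]
    rfl
  constructor
  · intro h
    have hlen := congrArg List.length h
    rw [length_factor j.2, List.length_singleton] at hlen
    obtain rfl : i = j := Fin.ext (by lia)
    exact ⟨rfl, List.singleton_injective (factor_self.symm.trans h)⟩
  · rintro ⟨rfl, rfl⟩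
    exact factor_self

theorem factor_mem_concat_iff {L₁ L₂ : Set (List A)} (h₁ : [] ∉ L₁) (h₂ : [] ∉ L₂) {w : List A}
    {i j : Fin w.length} :
    (∃ u ∈ L₁, ∃ v ∈ L₂, factor w i j = u ++ v) ↔
      ∃ k k' : Fin w.length, (k' : ℕ) = k + 1 ∧ factor w i k ∈ L₁ ∧ factor w k' j ∈ L₂ := by
  constructor
  · rintro ⟨u, hu, v, hv, h⟩
    have hu_pos : 0 < u.length := List.length_pos_iff.mpr (ne_of_mem_of_not_mem hu h₁)
    have hv_pos : 0 < v.length := List.length_pos_iff.mpr (ne_of_mem_of_not_mem hv h₂)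
    have hlen := congrArg List.length h
    rw [length_factor j.2, List.length_append] at hlen
    have hk : i + u.length - 1 < w.length := by lia
    rw [← factor_append_factor (by lia) hk (by lia)] at h
    obtain ⟨hu_eq, hv_eq⟩ := List.append_inj h (by rw [length_factor hk]; lia)
    exact ⟨⟨_, hk⟩, ⟨i + u.length - 1 + 1, by lia⟩, rfl, Set.mem_of_eq_of_mem hu_eq hu,
      Set.mem_of_eq_of_mem hv_eq hv⟩
  · rintro ⟨k, k', hk, hu, hv⟩
    have hik := (factor_ne_nil_iff k.2 i).mp (ne_of_mem_of_not_mem hu h₁)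
    have hkj := (factor_ne_nil_iff j.2 k').mp (ne_of_mem_of_not_mem hv h₂)
    refine ⟨_, hu, _, hv, ?_⟩
    rw [hk, factor_append_factor (by lia) k.2 (by lia)]

theorem StarFree.foExpressible_factor_mem {L : Set (List A)} (hL : StarFree L) :
    FOExpressible fun w (v : Fin 2 → Fin w.length) => factor w (v 0) (v 1) ∈ L := by
  have hne_nil : FOExpressible fun (w : List A) (v : Fin 2 → Fin w.length) =>
      factor w (v 0) (v 1) ≠ [] :=
    (FOExpressible.lt 1 0).not.congr fun _ v => not_lt.trans (factor_ne_nil_iff (v 1).2 _).symm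
  induction hL with
  | all => exact hne_nil
  | single c =>
    exact ((FOExpressible.eq 0 1).and (.get_eq 0 c)).congr fun _ _ => factor_eq_singleton_iff.symm
  | concat hL₁ hL₂ ih₁ ih₂ =>
    have hfactors := (ih₁.relabel (β := (Fin 2 ⊕ Unit) ⊕ Unit)
      ![.inl (.inl 0), .inl (.inr ())]).and (ih₂.relabel ![.inr (), .inl (.inl 1)])
    have hcut := (FOExpressible.val_eq_succ (.inl (.inr ())) (.inr ())).and hfactors
    exact hcut.exists_sumElim.exists_sumElim.congr fun _ _ =>
      (factor_mem_concat_iff hL₁.nil_notMem hL₂.nil_notMem).symm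
  | union _ _ ih₁ ih₂ => exact ih₁.or ih₂
  | compl _ ih => exact hne_nil.and ih.not

theorem mem_iff_exists_factor_mem {L : Set (List A)} {w : List A} (hw : w ≠ []) :
    w ∈ L ↔ ∃ i j : Fin w.length, (i : ℕ) = 0 ∧ (j : ℕ) + 1 = w.length ∧ factor w i j ∈ L := by
  have factor_full {i j : ℕ} (hi : i = 0) (hj : j + 1 = w.length) : factor w i j = w := by
    rw [factor, hi, hj, List.take_length, List.drop_zero]
  have hpos := List.length_pos_iff.mpr hw
  refine ⟨fun h => ⟨⟨0, hpos⟩, ⟨w.length - 1, by lia⟩, rfl, Nat.sub_add_cancel hpos, ?_⟩, ?_⟩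
  · rwa [factor_full rfl (Nat.sub_add_cancel hpos)]
  · rintro ⟨i, j, hi, hj, h⟩
    rwa [factor_full hi hj] at h

theorem StarFree.foDefinable {L : Set (List A)} (hL : StarFree L) : FODefinable L := by
  have hfactor := hL.foExpressible_factor_mem.relabel (β := (Empty ⊕ Unit) ⊕ Unit)
    ![.inl (.inr ()), .inr ()]
  have hends := (FOExpressible.val_eq_zero (.inl (.inr ()))).and
    ((FOExpressible.val_add_one_eq_length (.inr ())).and hfactor)
  obtain ⟨θ, hθ⟩ := hends.exists_sumElim.exists_sumElim
  refine ⟨θ, Set.ext fun w => ⟨fun hw => ?_, fun ⟨hne, hw⟩ => ?_⟩⟩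
  · have hne : w ≠ [] := ne_of_mem_of_not_mem hw hL.nil_notMem
    exact ⟨hne, (hθ w default).mpr ((mem_iff_exists_factor_mem hne).mp hw)⟩
  · exact (mem_iff_exists_factor_mem hne).mpr ((hθ w default).mp hw)

end StarFreeToFirstOrder

theorem schutzenberger_mcnaughton_papert_general {A : Type} [Finite A] (L : Set (List A))
    (hne : [] ∉ L) :
    (StarFree L ↔
        ∃ (σ : Type) (_ : Fintype σ) (M : DFA A σ), IsCounterFree M ∧ M.accepts = L) ∧
    (StarFree L ↔
        ∃ (S : FinSemigroup) (h : List A → S.carrier) (F : Set S.carrier),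
          IsAperiodic S.carrier ∧ RecognisedBy h F L) ∧
    (StarFree L ↔ FODefinable L) := by
  have starFree_iff : StarFree L ↔ RecognisedByAperiodicMonoid L :=
    ⟨fun h => h.foDefinable.recognisedByAperiodicMonoid, fun h => h.starFree hne⟩
  exact ⟨starFree_iff.trans recognisedByAperiodicMonoid_iff_exists_dfa,
    starFree_iff.trans (recognisedByAperiodicMonoid_iff_exists_semigroup hne),
    StarFree.foDefinable, fun h => starFree_iff.mpr h.recognisedByAperiodicMonoid⟩

/-- The Schützenberger–McNaughton–Papert theorem. -/
theorem schutzenberger_mcnaughton_papert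
    {A : Type} [Fintype A] (L : Set (List A)) (hne : [] ∉ L)
    (hreg : Language.IsRegular (L : Language A)) :
    (StarFree L ↔
        ∃ (σ : Type) (_ : Fintype σ) (M : DFA A σ), IsCounterFree M ∧ M.accepts = L) ∧
    (StarFree L ↔
        ∃ (S : FinSemigroup) (h : List A → S.carrier) (F : Set S.carrier),
          IsAperiodic S.carrier ∧ RecognisedBy h F L) ∧
    (StarFree L ↔ FODefinable L) := by
  exact schutzenberger_mcnaughton_papert_general L hne
end

section
/- (Kamp's theorem over finite timelines.) For every FO-formula θ(x) in the signature σ_lin with one free variable x, there is an LTL-formula φ_θ such that for every finite temporal model M: M ⊨ θ(0) if and only if M,0 ⊨ φ_θ. -/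
open FirstOrder

/-- LTL-formulas over propositional variables indexed by `ℕ`, with the temporal
operators ○ (next), ◇ (strict eventually) and U (strict until). -/
inductive LTL : Type
  | top : LTL
  | var : ℕ → LTL
  | and : LTL → LTL → LTL
  | not : LTL → LTL
  | next : LTL → LTL
  | ev : LTL → LTL
  | untl : LTL → LTL → LTL

/-- A finite temporal model `({0,…,ℓ}, <, V)`, given by `ℓ = len` and the valuation `V`. -/
structure TModel : Type where
  len : ℕ
  V : ℕ → ℕ → Prop

/-- Truth of an LTL-formula at a time point `n ≤ len` of a finite temporal model. -/
def LTL.sat (M : TModel) : ℕ → LTL → Prop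
  | _, .top => True
  | n, .var p => M.V p n
  | n, .and φ ψ => LTL.sat M n φ ∧ LTL.sat M n ψ
  | n, .not φ => ¬ LTL.sat M n φ
  | n, .next φ => n < M.len ∧ LTL.sat M (n + 1) φ
  | n, .ev φ => ∃ m, n < m ∧ m ≤ M.len ∧ LTL.sat M m φ
  | n, .untl φ ψ => ∃ m, n < m ∧ m ≤ M.len ∧ LTL.sat M m φ ∧
      ∀ k, n < k → k < m → LTL.sat M k ψ

/-- Relation symbols of the signature `σ_lin`: a unary predicate `P_i` for each
propositional variable `p_i` and the binary predicate `<`. -/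
def LinRel : ℕ → Type
  | 1 => ℕ
  | 2 => Unit
  | _ => Empty

/-- The first-order signature `σ_lin`. -/
def linLang : FirstOrder.Language := ⟨fun _ => Empty, LinRel⟩

/-- A finite temporal model regarded as a `σ_lin`-structure with domain `{0,…,ℓ}`. -/
def TModel.toStructure (M : TModel) : linLang.Structure (Fin (M.len + 1)) where
  funMap := fun f _ => Empty.elim f
  RelMap := fun {n} r =>
    match n, r with
    | 1, p => fun v => M.V p (v 0)
    | 2, _ => fun v => v 0 < v 1

/-- Realization of a `σ_lin`-formula with one free variable at a time point. -/
def TModel.realizeAt (M : TModel) (θ : linLang.Formula (Fin 1)) (t : Fin (M.len + 1)) :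
    Prop :=
  letI := M.toStructure
  θ.Realize (fun _ => t)

/-!
Words are compared by their Ehrenfeucht–Fraïssé types of rank `k`. There are finitely many types
over a finite alphabet, concatenation respects them, and the `n`-th power of a word has the same
type for all `n ≥ 2 ^ k - 1`; so the type of a word is computed by a finite aperiodic automaton.

Such automata are definable in linear temporal logic (Wilke). If all letters act injectively,
aperiodicity makes them act as the identity. Otherwise some letter `c` acts with a smaller image,
and cutting a word at the occurrences of `c` leaves blocks over the alphabet without `c`, together
with a word whose letters are the actions of the blocks followed by `c`. The latter is read by an
automaton on the image of `c`, which is again aperiodic but has fewer states.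

A first-order formula at the initial point cannot distinguish models whose words have the same
first letter and the same type of the remainder, and there are finitely many such pairs.
-/

namespace Kamp

open Function Set

universe u

section Definable

variable {A : Type*} {S : Set A}

/-- The next operator on properties of words. The suffixes of a word, including the empty one,
play the role of its positions. -/
def Next (P : List A → Prop) : List A → Prop
  | [] => False
  | _ :: w => P w

/-- The non-strict until operator on properties of words: some suffix satisfies `P`, and all
longer ones satisfy `P'`. -/
def Until (P P' : List A → Prop) : List A → Prop
  | [] => P []
  | a :: w => P (a :: w) ∨ P' (a :: w) ∧ Until P P' w

@[simp] theorem next_nil {P : List A → Prop} : ¬Next P [] := id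

@[simp] theorem next_cons {P : List A → Prop} {a : A} {w : List A} :
    Next P (a :: w) ↔ P w := Iff.rfl

@[simp] theorem until_nil {P P' : List A → Prop} : Until P P' [] ↔ P [] := Iff.rfl

@[simp] theorem until_cons {P P' : List A → Prop} {a : A} {w : List A} :
    Until P P' (a :: w) ↔ P (a :: w) ∨ P' (a :: w) ∧ Until P P' w := Iff.rfl

/-- The properties of words that agree, on words over the alphabet `S`, with a property
expressible in linear temporal logic. The values on words outside `S` are irrelevant, which makes it
possible to shrink the alphabet without changing the type of letters. -/
inductive Definable (S : Set A) : (List A → Prop) → Prop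
  | top : Definable S fun _ ↦ True
  | letter (a : A) : Definable S fun w ↦ w.head? = some a
  | and {P P'} : Definable S P → Definable S P' → Definable S fun w ↦ P w ∧ P' w
  | not {P} : Definable S P → Definable S fun w ↦ ¬P w
  | next {P} : Definable S P → Definable S (Next P)
  | untl {P P'} : Definable S P → Definable S P' → Definable S (Until P P')
  | congr {P P'} : Definable S P → (∀ w, (∀ a ∈ w, a ∈ S) → (P w ↔ P' w)) → Definable S P'

namespace Definable

variable {P P' : List A → Prop}

theorem of_iff (h : Definable S P) (e : ∀ w, P w ↔ P' w) : Definable S P' :=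
  h.congr fun w _ ↦ e w

theorem or (h : Definable S P) (h' : Definable S P') : Definable S fun w ↦ P w ∨ P' w :=
  (h.not.and h'.not).not.of_iff fun _ ↦ or_iff_not_and_not.symm

theorem imp (h : Definable S P) (h' : Definable S P') : Definable S fun w ↦ P w → P' w :=
  (h.not.or h').of_iff fun _ ↦ imp_iff_not_or.symm

theorem const (p : Prop) : Definable S fun _ ↦ p := by
  by_cases hp : p
  · exact top.of_iff (by simp [hp])
  · exact top.not.of_iff (by simp [hp])

theorem forall_of_finite {ι : Type*} [Finite ι] {P : ι → List A → Prop}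
    (h : ∀ i, Definable S (P i)) : Definable S fun w ↦ ∀ i, P i w := by
  induction ι using Finite.induction_empty_option with
  | of_equiv e ih => exact (ih fun i ↦ h (e i)).of_iff fun w ↦ e.forall_congr_right (q := (P · w))
  | h_empty => exact top.of_iff (by simp)
  | h_option ih =>
    exact ((h none).and (ih fun i ↦ h (some i))).of_iff fun w ↦
      (Option.forall (p := (P · w))).symm

theorem exists_of_finite {ι : Type*} [Finite ι] {P : ι → List A → Prop}
    (h : ∀ i, Definable S (P i)) : Definable S fun w ↦ ∃ i, P i w :=
  (forall_of_finite fun i ↦ (h i).not).not.of_iff fun _ ↦ not_forall_not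

end Definable

end Definable

section Blocks

variable {A T : Type*} {S : Set A} {c : A} {P P' : List A → Prop} {u v w : List A}

/-- Until relativized to the positions that follow an occurrence of `c`: `P` holds after some
occurrence of `c`, and `P'` holds after every earlier one. -/
def UntilAfter (c : A) (P P' : List A → Prop) : List A → Prop :=
  Until (fun w ↦ w.head? = some c ∧ Next P w) (fun w ↦ w.head? = some c → Next P' w)

theorem Definable.untilAfter (h : Definable S P) (h' : Definable S P') :
    Definable S (UntilAfter c P P') :=
  ((letter c).and h.next).untl ((letter c).imp h'.next)

theorem not_untilAfter_of_notMem (hw : c ∉ w) : ¬UntilAfter c P P' w := by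
  unfold UntilAfter
  induction w <;> grind [Until]

theorem untilAfter_append_cons (hu : c ∉ u) :
    UntilAfter c P P' (u ++ c :: v) ↔ P v ∨ P' v ∧ UntilAfter c P P' v := by
  unfold UntilAfter
  induction u with
  | nil => simp
  | cons a u ih =>
    obtain ⟨hac, hu⟩ : a ≠ c ∧ c ∉ u := by simpa [eq_comm] using hu
    simp [hac, ih hu]

theorem Definable.mem (c : A) : Definable S fun w ↦ c ∈ w :=
  ((letter c).untl top).of_iff fun w ↦ by
    induction w with
    | nil => simp
    | cons a w ih => simp [ih, eq_comm]

theorem blockInduction {motive : List A → Prop} (notMem : ∀ w, c ∉ w → motive w)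
    (append_cons : ∀ u v, c ∉ u → motive v → motive (u ++ c :: v)) (w : List A) : motive w := by
  induction hn : w.length using Nat.strong_induction_on generalizing w with
  | _ n ih =>
    by_cases hw : c ∈ w
    · obtain ⟨u, v, rfl, hu⟩ := List.eq_append_cons_of_mem hw
      exact append_cons u v hu (ih v.length (by simp at hn; omega) v rfl)
    · exact notMem w hw

variable [DecidableEq A]

/-- The longest prefix of `w` without the letter `c`. -/
def firstBlock (c : A) (w : List A) : List A := w.takeWhile (· ≠ c)

/-- The longest suffix of `w` without the letter `c`. -/
def lastBlock (c : A) (w : List A) : List A := w.rtakeWhile (· ≠ c)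

/-- The words `u₁, …, uₙ` in the factorization `w = u₁c⋯uₙcv` with `c` in none of `u₁, …, uₙ, v`. -/
def blocks (c : A) (w : List A) : List (List A) := (w.splitOn c).dropLast

theorem firstBlock_nil (c : A) : firstBlock c [] = [] := rfl

theorem firstBlock_cons (c a : A) (w : List A) :
    firstBlock c (a :: w) = if a = c then [] else a :: firstBlock c w := by
  simp [firstBlock, List.takeWhile_cons]

theorem firstBlock_of_notMem (hw : c ∉ w) : firstBlock c w = w :=
  List.takeWhile_eq_self_iff.2 <| by grind

theorem firstBlock_append_cons (hu : c ∉ u) : firstBlock c (u ++ c :: v) = u := by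
  rw [firstBlock, List.takeWhile_append_of_pos (by grind)]
  simp

theorem lastBlock_of_notMem (hw : c ∉ w) : lastBlock c w = w :=
  List.rtakeWhile_eq_self_iff.2 <| by grind

theorem lastBlock_append_cons : lastBlock c (u ++ c :: v) = lastBlock c v := by
  rw [lastBlock, List.rtakeWhile, List.reverse_append, List.reverse_cons, List.append_assoc,
    List.takeWhile_append]
  split_ifs with h
  · rw [lastBlock, List.rtakeWhile, (List.takeWhile_prefix _).eq_of_length h]
    simp
  · rfl

theorem blocks_of_notMem (hw : c ∉ w) : blocks c w = [] := by
  simp [blocks, List.splitOn_eq_singleton hw]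

theorem blocks_append_cons (hu : c ∉ u) : blocks c (u ++ c :: v) = u :: blocks c v := by
  rw [blocks, List.splitOn_append_cons_self_of_not_mem hu,
    List.dropLast_cons_of_ne_nil (List.splitOn_ne_nil c v), blocks]

theorem flatMap_blocks_append_lastBlock (c : A) (w : List A) :
    (blocks c w).flatMap (· ++ [c]) ++ lastBlock c w = w := by
  induction w using blockInduction (c := c) with
  | notMem w hw => simp [blocks_of_notMem hw, lastBlock_of_notMem hw]
  | append_cons u v hu ih => simp [blocks_append_cons hu, lastBlock_append_cons, ih]

namespace Definable

theorem comp_firstBlock (h : Definable (S \ {c}) P) : Definable S fun w ↦ P (firstBlock c w) := by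
  have head_ne : Definable S fun w ↦ w.head? ≠ some c := (letter c).not
  induction h with
  | top => exact top
  | letter a =>
    refine ((letter a).and (const (a ≠ c))).of_iff fun w ↦ ?_
    cases w <;> grind [firstBlock_nil, firstBlock_cons]
  | and _ _ ih ih' => exact ih.and ih'
  | not _ ih => exact ih.not
  | next _ ih =>
    refine (head_ne.and ih.next).of_iff fun w ↦ ?_
    cases w with
    | nil => simp [firstBlock_nil]
    | cons a w => by_cases ha : a = c <;> simp [firstBlock_cons, ha]
  | untl _ _ ih ih' =>
    refine (ih.untl (head_ne.and ih')).of_iff fun w ↦ ?_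
    induction w with
    | nil => simp [firstBlock_nil]
    | cons a w ihw => by_cases ha : a = c <;> simp [firstBlock_cons, ha, ihw]
  | congr _ e ih =>
    refine ih.congr fun w hw ↦ e _ fun a ha ↦ ⟨hw a (List.takeWhile_subset _ ha), ?_⟩
    simpa using List.mem_takeWhile_imp ha

theorem comp_lastBlock (h : Definable (S \ {c}) P) : Definable S fun w ↦ P (lastBlock c w) := by
  have no_c : Definable S fun w ↦ c ∉ w ∧ P w :=
    ((mem c).not.and h.comp_firstBlock).of_iff fun w ↦
      and_congr_right fun hw ↦ by rw [firstBlock_of_notMem hw]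
  refine (no_c.or (untilAfter (c := c) no_c top)).of_iff fun w ↦ ?_
  induction w using blockInduction (c := c) with
  | notMem w hw => simp [hw, not_untilAfter_of_notMem hw, lastBlock_of_notMem hw]
  | append_cons u v hu ih => simp [untilAfter_append_cons hu, lastBlock_append_cons, ih]

theorem comp_map_blocks {β : List A → T} (hβ : ∀ t, Definable (S \ {c}) fun u ↦ β u = t)
    {P : List T → Prop} (h : Definable univ P) :
    Definable S fun w ↦ P ((blocks c w).map β) := by
  induction h with
  | top => exact top
  | letter t =>
    refine ((mem c).and (hβ t).comp_firstBlock).of_iff fun w ↦ ?_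
    cases w using blockInduction (c := c) with
    | notMem w hw => simp [hw, blocks_of_notMem hw]
    | append_cons u v hu => simp [blocks_append_cons hu, firstBlock_append_cons hu]
  | and _ _ ih ih' => exact ih.and ih'
  | not _ ih => exact ih.not
  | next _ ih =>
    refine (untilAfter (c := c) ih (const False)).of_iff fun w ↦ ?_
    cases w using blockInduction (c := c) with
    | notMem w hw => simp [not_untilAfter_of_notMem hw, blocks_of_notMem hw]
    | append_cons u v hu => simp [untilAfter_append_cons hu, blocks_append_cons hu]
  | untl _ _ ih ih' =>
    refine (ih.or (ih'.and (untilAfter (c := c) ih ih'))).of_iff fun w ↦ ?_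
    induction w using blockInduction (c := c) with
    | notMem w hw => simp [not_untilAfter_of_notMem hw, blocks_of_notMem hw]
    | append_cons u v hu ihv => simp [untilAfter_append_cons hu, blocks_append_cons hu, ihv]
  | congr _ e ih => exact ih.of_iff fun w ↦ e _ (by simp)

end Definable

end Blocks

section Automata

variable {A Q : Type*} {δ : Q → A → Q} {S : Set A} {c : A}

/-- The action of a word on the states of the automaton with transition function `δ`. -/
def wordAction (δ : Q → A → Q) (w : List A) (q : Q) : Q := w.foldl δ q

theorem wordAction_nil (q : Q) : wordAction δ [] q = q := rfl

theorem wordAction_cons (a : A) (w : List A) (q : Q) :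
    wordAction δ (a :: w) q = wordAction δ w (δ q a) := rfl

theorem wordAction_append (u v : List A) (q : Q) :
    wordAction δ (u ++ v) q = wordAction δ v (wordAction δ u q) :=
  List.foldl_append

/-- Aperiodicity of the transition monoid of the automaton with transition function `δ`. -/
def Aperiodic (δ : Q → A → Q) : Prop :=
  ∀ w, ∃ n, (wordAction δ w)^[n + 1] = (wordAction δ w)^[n]

theorem Aperiodic.eq_of_injective (hδ : Aperiodic δ) {a : A} (ha : Injective (δ · a)) (q : Q) :
    δ q a = q := by
  obtain ⟨n, hn⟩ := hδ [a]
  exact ha.iterate n (congrFun hn q)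

/-- The action of the words `uc` on the states that can be entered by the letter `c`. -/
def blockAction (δ : Q → A → Q) (c : A) (u : List A) (q : range (δ · c)) : range (δ · c) :=
  ⟨δ (wordAction δ u q) c, mem_range_self _⟩

/-- The local automaton at `c`, whose letters are the actions of the words `uc`. -/
def blockStep (δ : Q → A → Q) (c : A) (q : range (δ · c)) (t : range (blockAction δ c)) :
    range (δ · c) :=
  t.1 q

theorem coe_wordAction_blockStep (us : List (List A)) (q : range (δ · c)) :
    (wordAction (blockStep δ c) (us.map (rangeFactorization (blockAction δ c))) q :
      range (δ · c)) = wordAction δ (us.flatMap (· ++ [c])) q := by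
  induction us generalizing q with
  | nil => rfl
  | cons u us ih =>
    rw [List.map_cons, wordAction_cons, ih, List.flatMap_cons, wordAction_append, wordAction_append]
    rfl

theorem aperiodic_blockStep (hδ : Aperiodic δ) : Aperiodic (blockStep δ c) := by
  intro ts
  obtain ⟨us, rfl⟩ := List.map_surjective_iff.2 rangeFactorization_surjective ts
  obtain ⟨n, hn⟩ := hδ (us.flatMap (· ++ [c]))
  have coe_semiconj : Semiconj Subtype.val
      (wordAction (blockStep δ c) (us.map (rangeFactorization (blockAction δ c))))
      (wordAction δ (us.flatMap (· ++ [c]))) := coe_wordAction_blockStep us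
  refine ⟨n, funext fun q ↦ Subtype.ext ?_⟩
  rw [(coe_semiconj.iterate_right _).eq, (coe_semiconj.iterate_right _).eq, hn]

theorem definable_blockAction_eq [Finite Q]
    (h : ∀ q q', Definable (S \ {c}) fun w ↦ wordAction δ w q = q')
    (t : range (blockAction δ c)) :
    Definable (S \ {c}) fun u ↦ rangeFactorization (blockAction δ c) u = t := by
  have pointwise : Definable (S \ {c}) fun u ↦
      ∀ q : range (δ · c), ∃ q₁, wordAction δ u q = q₁ ∧ δ q₁ c = t.1 q :=
    .forall_of_finite fun q ↦ .exists_of_finite fun q₁ ↦ (h q q₁).and (.const _)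
  refine pointwise.of_iff fun u ↦ ?_
  simp [Subtype.ext_iff, funext_iff, blockAction]

theorem definable_wordAction_eq_of_block [Finite Q]
    (h : ∀ q q', Definable (S \ {c}) fun w ↦ wordAction δ w q = q')
    (h_block : ∀ q q', Definable univ fun ts ↦ wordAction (blockStep δ c) ts q = q') (q q' : Q) :
    Definable S fun w ↦ wordAction δ w q = q' := by
  classical
  have after_c (q : range (δ · c)) : Definable S fun w ↦ wordAction δ w q = q' := by
    have blocks_then_last : Definable S fun w ↦ ∃ q₁ : range (δ · c),
        wordAction (blockStep δ c) ((blocks c w).map (rangeFactorization (blockAction δ c))) q =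
          q₁ ∧ wordAction δ (lastBlock c w) q₁ = q' :=
      .exists_of_finite fun q₁ ↦
        ((h_block q q₁).comp_map_blocks (definable_blockAction_eq h)).and (h q₁ q').comp_lastBlock
    refine blocks_then_last.of_iff fun w ↦ ?_
    conv_rhs => rw [← flatMap_blocks_append_lastBlock c w, wordAction_append,
      ← coe_wordAction_blockStep]
    simp
  have no_c : Definable S fun w ↦ c ∉ w ∧ wordAction δ (firstBlock c w) q = q' :=
    (Definable.mem c).not.and (h q q').comp_firstBlock
  have some_c : Definable S fun w ↦ ∃ q₁, wordAction δ (firstBlock c w) q = q₁ ∧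
      UntilAfter c (fun v ↦ wordAction δ v (δ q₁ c) = q') (fun _ ↦ False) w :=
    .exists_of_finite fun q₁ ↦
      (h q q₁).comp_firstBlock.and (.untilAfter (after_c ⟨_, mem_range_self q₁⟩) (.const False))
  refine (no_c.or some_c).of_iff fun w ↦ ?_
  cases w using blockInduction (c := c) with
  | notMem w hw => simp [hw, firstBlock_of_notMem hw, not_untilAfter_of_notMem hw]
  | append_cons u v hu =>
    simp [firstBlock_append_cons hu, untilAfter_append_cons hu, wordAction_append, wordAction_cons]

theorem card_range_lt_of_not_injective [Finite Q] {f : Q → Q} (hf : ¬Injective f) :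
    Nat.card (range f) < Nat.card Q := by
  rw [Finite.injective_iff_surjective, Surjective] at hf
  push Not at hf
  obtain ⟨q, hq⟩ := hf
  exact Finite.card_subtype_lt (p := (· ∈ range f)) (x := q) (by simpa using hq)

-- The recursion replaces the letters by maps on states, hence the common universe.
theorem Aperiodic.definable_wordAction_eq {A Q : Type u} [Finite Q] {δ : Q → A → Q}
    (hδ : Aperiodic δ) {S : Set A} (hS : S.Finite) (q q' : Q) :
    Definable S fun w ↦ wordAction δ w q = q' := by
  by_cases h_inj : ∀ a ∈ S, Injective (δ · a)
  · refine (Definable.const (q = q')).congr fun w hw ↦ ?_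
    have fixed : wordAction δ w q = q := by
      induction w with
      | nil => rfl
      | cons a w ih =>
        obtain ⟨ha, hw⟩ := List.forall_mem_cons.1 hw
        rw [wordAction_cons, hδ.eq_of_injective (h_inj a ha), ih hw]
    rw [fixed]
  push Not at h_inj
  obtain ⟨c, hcS, hc⟩ := h_inj
  have := card_range_lt_of_not_injective hc
  have := ncard_sdiff_singleton_lt_of_mem hcS hS
  exact definable_wordAction_eq_of_block (c := c)
    (fun q q' ↦ hδ.definable_wordAction_eq hS.sdiff q q')
    (fun q q' ↦ (aperiodic_blockStep hδ).definable_wordAction_eq finite_univ q q') q q'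
termination_by (Nat.card Q, S.ncard)

end Automata

section Congruence

variable {A Q : Type u} [Finite A] [Finite Q] {g : List A → Q}

theorem definable_eq_of_rightCongruence_of_surjective (g_surj : Surjective g)
    (g_congr : ∀ u v a, g u = g v → g (u ++ [a]) = g (v ++ [a]))
    (g_aperiodic : ∀ w, ∃ n, ∀ u, g (u ++ (List.replicate (n + 1) w).flatten) =
      g (u ++ (List.replicate n w).flatten)) (q : Q) :
    Definable univ fun w ↦ g w = q := by
  let δ (q : Q) (a : A) : Q := g (surjInv g_surj q ++ [a])
  have wordAction_g (w u : List A) : wordAction δ w (g u) = g (u ++ w) := by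
    induction w generalizing u with
    | nil => simp [wordAction_nil]
    | cons a w ih =>
      have step : δ (g u) a = g (u ++ [a]) := g_congr _ _ _ (surjInv_eq g_surj _)
      simp [wordAction_cons, step, ih]
  have iterate_g (w u : List A) (n : ℕ) :
      (wordAction δ w)^[n] (g u) = g (u ++ (List.replicate n w).flatten) := by
    induction n generalizing u with
    | zero => simp
    | succ n ih => simp [iterate_succ_apply, wordAction_g, ih, List.replicate_succ]
  have δ_aperiodic : Aperiodic δ := fun w ↦ by
    obtain ⟨n, hn⟩ := g_aperiodic w
    refine ⟨n, funext <| g_surj.forall.2 fun u ↦ ?_⟩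
    rw [iterate_g, iterate_g, hn]
  exact (δ_aperiodic.definable_wordAction_eq finite_univ (g []) q).of_iff fun w ↦ by
    rw [wordAction_g, List.nil_append]

theorem definable_eq_of_rightCongruence
    (g_congr : ∀ u v a, g u = g v → g (u ++ [a]) = g (v ++ [a]))
    (g_aperiodic : ∀ w, ∃ n, ∀ u, g (u ++ (List.replicate (n + 1) w).flatten) =
      g (u ++ (List.replicate n w).flatten)) (q : Q) :
    Definable univ fun w ↦ g w = q := by
  by_cases hq : q ∈ range g
  · refine (definable_eq_of_rightCongruence_of_surjective (g := rangeFactorization g)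
      rangeFactorization_surjective ?_ ?_ ⟨q, hq⟩).of_iff fun w ↦ Subtype.ext_iff
    · simpa [Subtype.ext_iff] using g_congr
    · simpa [Subtype.ext_iff] using g_aperiodic
  · exact (Definable.const False).of_iff fun w ↦ iff_of_false id fun hw ↦ hq ⟨w, hw⟩

end Congruence

section EFType

variable {A B : Type*} {k m n : ℕ} {u u' v v' w w' : List A}

/-- The Ehrenfeucht–Fraïssé types of rank `k` of words. -/
def EFType (A : Type u) : ℕ → Type u
  | 0 => PUnit
  | k + 1 => Set (EFType A k × A × EFType A k)

instance (A : Type*) [Finite A] (k : ℕ) : Finite (EFType A k) := by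
  induction k with
  | zero => exact inferInstanceAs (Finite PUnit)
  | succ k ih => exact inferInstanceAs (Finite (Set (EFType A k × A × EFType A k)))

/-- The type of rank `k` of a word. Equality of types of rank `k` amounts to a winning strategy for
Duplicator in the `k`-round game on two words: picking a position splits the word into the letter at
that position and the two factors around it, in which the game continues independently. -/
def efType : (k : ℕ) → List A → EFType A k
  | 0, _ => PUnit.unit
  | k + 1, w => {t : EFType A k × A × EFType A k |
      ∃ u a v, w = u ++ a :: v ∧ t = (efType k u, a, efType k v)}

/-- Every move of Spoiler in `w` has an answer in `w'` with `k` rounds to go. -/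
def SplitSim (k : ℕ) (w w' : List A) : Prop :=
  ∀ u a v, w = u ++ a :: v →
    ∃ u' v', w' = u' ++ a :: v' ∧ efType k u = efType k u' ∧ efType k v = efType k v'

theorem efType_succ_eq_iff :
    efType (k + 1) w = efType (k + 1) w' ↔ SplitSim k w w' ∧ SplitSim k w' w := by
  have subset_iff (w w' : List A) : SplitSim k w w' ↔
      ∀ t : EFType A k × A × EFType A k,
        (∃ u a v, w = u ++ a :: v ∧ t = (efType k u, a, efType k v)) →
          ∃ u a v, w' = u ++ a :: v ∧ t = (efType k u, a, efType k v) := by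
    constructor
    · rintro h t ⟨u, a, v, hw, rfl⟩
      obtain ⟨u', v', hw', hu, hv⟩ := h u a v hw
      exact ⟨u', a, v', hw', by rw [hu, hv]⟩
    · intro h u a v hw
      obtain ⟨u', a', v', hw', ht⟩ := h _ ⟨u, a, v, hw, rfl⟩
      grind
  rw [subset_iff, subset_iff]
  exact Set.Subset.antisymm_iff

theorem efType_eq_of_succ (h : efType (k + 1) w = efType (k + 1) w') :
    efType k w = efType k w' := by
  induction k generalizing w w' with
  | zero => rfl
  | succ k ih =>
    have mono {w w' : List A} (h : SplitSim (k + 1) w w') : SplitSim k w w' := fun u a v hw ↦ by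
      obtain ⟨u', v', hw', hu, hv⟩ := h u a v hw
      exact ⟨u', v', hw', ih hu, ih hv⟩
    rw [efType_succ_eq_iff] at h ⊢
    exact h.imp mono mono

theorem efType_eq_of_le (hmn : m ≤ n) (h : efType n w = efType n w') :
    efType m w = efType m w' := by
  induction hmn with
  | refl => exact h
  | step _ ih => exact ih (efType_eq_of_succ h)

theorem mem_of_efType_one_eq {a : A} (h : efType 1 w = efType 1 w') (ha : a ∈ w) : a ∈ w' := by
  obtain ⟨u, v, rfl⟩ := List.append_of_mem ha
  obtain ⟨u', v', rfl, -⟩ := (efType_succ_eq_iff.1 h).1 _ _ _ rfl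
  simp

theorem eq_append_cons_of_append_eq {a : A} (h : u ++ v = u' ++ a :: v') :
    (∃ z, u = u' ++ a :: z ∧ v' = z ++ v) ∨ ∃ z, u' = u ++ z ∧ v = z ++ a :: v' := by
  obtain ⟨z, rfl, rfl⟩ | ⟨z, rfl, hz⟩ := List.append_eq_append_iff.1 h
  · exact .inr ⟨z, rfl, rfl⟩
  · cases z <;> simp_all

theorem efType_append (hu : efType k u = efType k u') (hv : efType k v = efType k v') :
    efType k (u ++ v) = efType k (u' ++ v') := by
  induction k generalizing u u' v v' with
  | zero => rfl
  | succ k ih =>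
    have sim {u u' v v' : List A} (hu : efType (k + 1) u = efType (k + 1) u')
        (hv : efType (k + 1) v = efType (k + 1) v') : SplitSim k (u ++ v) (u' ++ v') := by
      intro x a y h
      obtain ⟨z, rfl, rfl⟩ | ⟨z, rfl, rfl⟩ := eq_append_cons_of_append_eq h
      · obtain ⟨x', z', rfl, hx, hz⟩ := (efType_succ_eq_iff.1 hu).1 _ _ _ rfl
        exact ⟨x', z' ++ v', by simp, hx, ih hz (efType_eq_of_succ hv)⟩
      · obtain ⟨z', y', rfl, hz, hy⟩ := (efType_succ_eq_iff.1 hv).1 _ _ _ rfl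
        exact ⟨u' ++ z', y', by simp, ih (efType_eq_of_succ hu) hz, hy⟩
    exact efType_succ_eq_iff.2 ⟨sim hu hv, sim hu.symm hv.symm⟩

theorem efType_cons {a : A} (h : efType k v = efType k v') :
    efType k (a :: v) = efType k (a :: v') :=
  efType_append (u := [a]) (u' := [a]) rfl h

theorem efType_map (f : A → B) (h : efType k w = efType k w') :
    efType k (w.map f) = efType k (w'.map f) := by
  induction k generalizing w w' with
  | zero => rfl
  | succ k ih =>
    have sim {w w' : List A} (h : efType (k + 1) w = efType (k + 1) w') :
        SplitSim k (w.map f) (w'.map f) := by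
      intro x b y hxy
      obtain ⟨u, _, rfl, rfl, hy⟩ := List.map_eq_append_iff.1 hxy
      obtain ⟨a, v, rfl, rfl, rfl⟩ := List.map_eq_cons_iff.1 hy
      obtain ⟨u', v', rfl, hu, hv⟩ := (efType_succ_eq_iff.1 h).1 _ _ _ rfl
      exact ⟨u'.map f, v'.map f, by simp, ih hu, ih hv⟩
    exact efType_succ_eq_iff.2 ⟨sim h, sim h.symm⟩

theorem exists_of_flatten_replicate_eq_append_cons {a : A}
    (h : (List.replicate n w).flatten = u ++ a :: v) :
    ∃ i j x y, n = i + 1 + j ∧ w = x ++ a :: y ∧ u = (List.replicate i w).flatten ++ x ∧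
      v = y ++ (List.replicate j w).flatten := by
  induction n generalizing u with
  | zero => simp at h
  | succ n ih =>
    rw [List.replicate_succ, List.flatten_cons] at h
    obtain ⟨y, hw, rfl⟩ | ⟨z, rfl, hz⟩ := eq_append_cons_of_append_eq h
    · exact ⟨0, n, u, y, by omega, hw, by simp, rfl⟩
    · obtain ⟨i, j, x, y, rfl, hw, rfl, rfl⟩ := ih hz
      exact ⟨i + 1, j, x, y, by omega, hw, by simp [List.replicate_succ], rfl⟩

theorem efType_flatten_replicate (hm : 2 ^ k ≤ m + 1) (hn : 2 ^ k ≤ n + 1) :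
    efType k (List.replicate m w).flatten = efType k (List.replicate n w).flatten := by
  induction k generalizing m n with
  | zero => rfl
  | succ k ih =>
    have pow_pos : 0 < 2 ^ k := by positivity
    have sim {m n : ℕ} (hm : 2 ^ (k + 1) ≤ m + 1) (hn : 2 ^ (k + 1) ≤ n + 1) :
        SplitSim k (List.replicate m w).flatten (List.replicate n w).flatten := by
      intro u a v h
      obtain ⟨i, j, x, y, rfl, hw, rfl, rfl⟩ := exists_of_flatten_replicate_eq_append_cons h
      obtain ⟨i', j', rfl, hi, hj⟩ : ∃ i' j', n = i' + 1 + j' ∧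
          (i = i' ∨ 2 ^ k ≤ i + 1 ∧ 2 ^ k ≤ i' + 1) ∧
          (j = j' ∨ 2 ^ k ≤ j + 1 ∧ 2 ^ k ≤ j' + 1) := by
        by_cases hi : 2 ^ k ≤ i + 1
        · by_cases hj : 2 ^ k ≤ j + 1
          · exact ⟨2 ^ k - 1, n - 2 ^ k, by omega, by omega, by omega⟩
          · exact ⟨n - 1 - j, j, by omega, by omega, .inl rfl⟩
        · exact ⟨i, n - 1 - i, by omega, .inl rfl, by omega⟩
      have power_eq {p q : ℕ} : p = q ∨ 2 ^ k ≤ p + 1 ∧ 2 ^ k ≤ q + 1 →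
          efType k (List.replicate p w).flatten = efType k (List.replicate q w).flatten := by
        rintro (rfl | ⟨hp, hq⟩)
        exacts [rfl, ih hp hq]
      refine ⟨(List.replicate i' w).flatten ++ x, y ++ (List.replicate j' w).flatten, ?_,
        efType_append (power_eq hi) rfl, efType_append rfl (power_eq hj)⟩
      rw [List.replicate_add, List.replicate_add, List.flatten_append, List.flatten_append]
      simp [hw]
    exact efType_succ_eq_iff.2 ⟨sim hm hn, sim hn hm⟩

theorem definable_efType_eq {A : Type u} [Finite A] (t : EFType A k) :
    Definable univ fun w ↦ efType k w = t :=
  definable_eq_of_rightCongruence (fun _ _ _ h ↦ efType_append h rfl)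
    (fun _ ↦ ⟨2 ^ k, fun _ ↦
      efType_append rfl <| efType_flatten_replicate (by omega) (by omega)⟩) t

theorem definable_cons_efType_mem {A : Type u} [Finite A] (X : Set (A × EFType A k)) :
    Definable univ fun w ↦ ∃ a v, w = a :: v ∧ (a, efType k v) ∈ X := by
  have head_and_next : Definable univ fun w ↦ ∃ x : X,
      w.head? = some x.1.1 ∧ Next (fun v ↦ efType k v = x.1.2) w :=
    .exists_of_finite fun x ↦ (Definable.letter x.1.1).and (definable_efType_eq x.1.2).next
  refine head_and_next.of_iff fun w ↦ ?_
  cases w <;> simp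

end EFType

section LTL

variable {M : TModel} {N n : ℕ} {φ ψ : LTL}

/-- Disjunction of LTL-formulas. -/
def disj (φ ψ : LTL) : LTL := .not (.and (.not φ) (.not ψ))

/-- Conjunction of a list of LTL-formulas. -/
def conj (φs : List LTL) : LTL := φs.foldr .and .top

open Classical in
/-- The LTL-formula expressing a proposition that does not depend on the model. -/
noncomputable def ofProp (p : Prop) : LTL := if p then .top else .not .top

/-- The LTL-formula expressing that the current time point is the last one. -/
def last : LTL := .not (.next .top)

theorem sat_and : LTL.sat M n (.and φ ψ) ↔ LTL.sat M n φ ∧ LTL.sat M n ψ := Iff.rfl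

theorem sat_disj : LTL.sat M n (disj φ ψ) ↔ LTL.sat M n φ ∨ LTL.sat M n ψ := by
  simp only [disj, LTL.sat, or_iff_not_and_not]

theorem sat_conj {φs : List LTL} : LTL.sat M n (conj φs) ↔ ∀ φ ∈ φs, LTL.sat M n φ := by
  induction φs with
  | nil => simp [conj, LTL.sat]
  | cons φ φs ih => rw [List.forall_mem_cons, ← ih]; rfl

theorem sat_ofProp {p : Prop} : LTL.sat M n (ofProp p) ↔ p := by
  by_cases hp : p <;> simp [ofProp, hp, LTL.sat]

theorem sat_last : LTL.sat M n last ↔ M.len ≤ n := by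
  simp [last, LTL.sat]

theorem sat_untl : LTL.sat M n (.untl φ ψ) ↔ n < M.len ∧
    (LTL.sat M (n + 1) φ ∨ LTL.sat M (n + 1) ψ ∧ LTL.sat M (n + 1) (.untl φ ψ)) := by
  simp only [LTL.sat]
  constructor
  · rintro ⟨m, hnm, hm, hφ, hψ⟩
    refine ⟨by omega, ?_⟩
    obtain rfl | hnm := (Nat.succ_le_of_lt hnm).eq_or_lt
    · exact .inl hφ
    · exact .inr ⟨hψ _ (by omega) hnm, m, hnm, hm, hφ, fun k hk ↦ hψ k (by omega)⟩
  · rintro ⟨hn, hφ | ⟨hψ, m, hnm, hm, hφ, hψ'⟩⟩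
    · exact ⟨n + 1, by omega, hn, hφ, fun k _ _ ↦ by omega⟩
    · refine ⟨m, by omega, hm, hφ, fun k hnk hkm ↦ ?_⟩
      obtain rfl | hnk := (Nat.succ_le_of_lt hnk).eq_or_lt
      exacts [hψ, hψ' k hnk hkm]

/-- The valuation of the first `N` propositional variables at the time point `t`. -/
def letter (N : ℕ) (M : TModel) (t : ℕ) (p : Fin N) : Prop := M.V p t

/-- The word formed by the valuations of the first `N` propositional variables from the time point
`n` on. -/
def word (N : ℕ) (M : TModel) (n : ℕ) : List (Fin N → Prop) :=
  (List.range' n (M.len + 1 - n)).map (letter N M)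

theorem word_of_le (hn : n ≤ M.len) : word N M n = letter N M n :: word N M (n + 1) := by
  rw [word, show M.len + 1 - n = M.len + 1 - (n + 1) + 1 by omega, List.range'_succ, List.map_cons,
    word]

theorem word_len_add_one : word N M (M.len + 1) = [] := by simp [word]

theorem exists_sat_iff_letter_eq (a : Fin N → Prop) :
    ∃ φ, ∀ M n, LTL.sat M n φ ↔ letter N M n = a := by
  have literal (p : Fin N) : ∃ φ, ∀ M n, LTL.sat M n φ ↔ (M.V p n ↔ a p) := by
    by_cases hp : a p
    · exact ⟨.var p, by simp [hp, LTL.sat]⟩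
    · exact ⟨.not (.var p), by simp [hp, LTL.sat]⟩
  choose φ hφ using literal
  exact ⟨conj (List.ofFn φ), fun M n ↦ by
    simp [sat_conj, hφ, funext_iff, letter]⟩

theorem exists_sat_iff_next {P : List (Fin N → Prop) → Prop}
    (hφ : ∀ M, ∀ n ≤ M.len, LTL.sat M n φ ↔ P (word N M n)) :
    ∃ χ, ∀ M, ∀ n ≤ M.len, LTL.sat M n χ ↔ Next P (word N M n) := by
  refine ⟨disj (.next φ) (.and (ofProp (P [])) last), fun M n hn ↦ ?_⟩
  simp only [sat_disj, LTL.sat, sat_ofProp, sat_last, word_of_le hn, next_cons]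
  obtain rfl | hn := hn.eq_or_lt
  · simp [word_len_add_one]
  · simp [hn, hφ M (n + 1) hn]

theorem exists_sat_iff_until {P P' : List (Fin N → Prop) → Prop}
    (hφ : ∀ M, ∀ n ≤ M.len, LTL.sat M n φ ↔ P (word N M n))
    (hψ : ∀ M, ∀ n ≤ M.len, LTL.sat M n ψ ↔ P' (word N M n)) :
    ∃ χ, ∀ M, ∀ n ≤ M.len, LTL.sat M n χ ↔ Until P P' (word N M n) := by
  -- The empty word can witness `Until`, but is not a time point: hence the second disjunct.
  obtain ⟨φ', sat_φ'⟩ : ∃ φ', ∀ M n, LTL.sat M n φ' ↔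
      LTL.sat M n φ ∨ P [] ∧ LTL.sat M n ψ ∧ M.len ≤ n :=
    ⟨disj φ (.and (ofProp (P [])) (.and ψ last)), fun M n ↦ by
      rw [sat_disj, sat_and, sat_and, sat_ofProp, sat_last]⟩
  refine ⟨disj φ' (.and ψ (.untl φ' ψ)), fun M n hn ↦ ?_⟩
  induction hn using Nat.decreasingInduction with
  | self =>
    rw [word_of_le le_rfl, until_cons, ← word_of_le le_rfl, word_len_add_one, until_nil]
    rw [sat_disj, sat_φ', sat_and, sat_untl, hφ _ _ le_rfl, hψ _ _ le_rfl]
    simp [and_comm]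
  | of_succ n hn ih =>
    rw [word_of_le hn.le, until_cons, ← word_of_le hn.le, ← ih, ← hφ M n hn.le, ← hψ M n hn.le]
    rw [sat_disj (n := n), sat_φ', sat_and, sat_untl, sat_disj, sat_and]
    simp only [hn, hn.not_ge, and_false, or_false, true_and]

theorem Definable.exists_sat_iff {P : List (Fin N → Prop) → Prop} (h : Definable univ P) :
    ∃ φ, ∀ M, ∀ n ≤ M.len, LTL.sat M n φ ↔ P (word N M n) := by
  induction h with
  | top => exact ⟨.top, by simp [LTL.sat]⟩
  | letter a =>
    obtain ⟨φ, hφ⟩ := exists_sat_iff_letter_eq a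
    exact ⟨φ, fun M n hn ↦ by simp [hφ, word_of_le hn, eq_comm]⟩
  | and _ _ ih ih' =>
    obtain ⟨φ, hφ⟩ := ih
    obtain ⟨ψ, hψ⟩ := ih'
    exact ⟨.and φ ψ, fun M n hn ↦ and_congr (hφ M n hn) (hψ M n hn)⟩
  | not _ ih =>
    obtain ⟨φ, hφ⟩ := ih
    exact ⟨.not φ, fun M n hn ↦ not_congr (hφ M n hn)⟩
  | next _ ih =>
    obtain ⟨φ, hφ⟩ := ih
    exact exists_sat_iff_next hφ
  | untl _ _ ih ih' =>
    obtain ⟨φ, hφ⟩ := ih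
    obtain ⟨ψ, hψ⟩ := ih'
    exact exists_sat_iff_until hφ hψ
  | congr _ e ih =>
    obtain ⟨φ, hφ⟩ := ih
    exact ⟨φ, fun M n hn ↦ (hφ M n hn).trans (e _ (by simp))⟩

end LTL

section MarkedWord

variable {V : Type*} {k k' N N' : ℕ} {M M' : TModel}

/-- The letter at the time point `t` for the assignment `s` of first-order variables to time points:
it records which of the first `N` propositional variables hold at `t`, and which first-order
variables have the value `t`. -/
def markedLetter (N : ℕ) (M : TModel) (s : V → Fin (M.len + 1)) (t : ℕ) :
    (Fin N → Prop) × (V → Prop) :=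
  (letter N M t, fun i ↦ s i = t)

/-- The word of a finite temporal model with an assignment of first-order variables. -/
def markedWord (N : ℕ) (M : TModel) (s : V → Fin (M.len + 1)) :
    List ((Fin N → Prop) × (V → Prop)) :=
  (List.range (M.len + 1)).map (markedLetter N M s)

/-- Places the first-order variable `j` at a letter, or removes it from there. -/
def setMark [DecidableEq V] (j : V) (p : Prop) :
    (Fin N → Prop) × (V → Prop) → (Fin N → Prop) × (V → Prop) :=
  Prod.map id (update · j p)

variable {s : V → Fin (M.len + 1)} {s' : V → Fin (M'.len + 1)}

theorem efType_markedWord_eq_of_le (hN : N ≤ N') (hk : k ≤ k')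
    (h : efType k' (markedWord N' M s) = efType k' (markedWord N' M' s')) :
    efType k (markedWord N M s) = efType k (markedWord N M' s') := by
  have h_restrict := efType_eq_of_le hk (efType_map (Prod.map (· ∘ Fin.castLE hN) id) h)
  rwa [markedWord, markedWord, List.map_map, List.map_map] at h_restrict

theorem valuation_iff_of_markedLetter_eq {t t' p : ℕ} (hp : p < N)
    (h : markedLetter N M s t = markedLetter N M' s' t') : M.V p t ↔ M'.V p t' :=
  .of_eq (congrFun (congrArg Prod.fst h) ⟨p, hp⟩)

theorem coe_eq_iff_of_markedLetter_eq {t t' : ℕ} (i : V)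
    (h : markedLetter N M s t = markedLetter N M' s' t') : s i = t ↔ s' i = t' :=
  .of_eq (congrFun (congrArg Prod.snd h) i)

theorem markedLetter_eq_of_efType_one_eq
    (h : efType 1 (markedWord N M s) = efType 1 (markedWord N M' s')) (i : V) :
    markedLetter N M s (s i) = markedLetter N M' s' (s' i) := by
  obtain ⟨t', -, ht'⟩ := List.mem_map.1 <|
    mem_of_efType_one_eq h (List.mem_map_of_mem (List.mem_range.2 (s i).2))
  rw [(coe_eq_iff_of_markedLetter_eq i ht'.symm).1 rfl, ht']

theorem mem_iff_lt_of_range_eq_append_cons {n t x : ℕ} {u v : List ℕ}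
    (h : List.range n = u ++ x :: v) : t ∈ u ↔ t < x := by
  obtain ⟨-, h_right, h_left⟩ := List.pairwise_append.1 (h ▸ List.pairwise_lt_range (n := n))
  refine ⟨fun ht ↦ h_left _ ht _ (by simp), fun ht ↦ ?_⟩
  have hx : x ∈ List.range n := h ▸ by simp
  have h_mem : t ∈ u ++ x :: v := h ▸ List.mem_range.2 (ht.trans (List.mem_range.1 hx))
  have h_lt := (List.pairwise_cons.1 h_right).1
  grind

theorem exists_of_efType_markedWord_succ_eq
    (h : efType (k + 1) (markedWord N M s) = efType (k + 1) (markedWord N M' s'))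
    (x : Fin (M.len + 1)) {u v : List ℕ} (hx : List.range (M.len + 1) = u ++ (x : ℕ) :: v) :
    ∃ (x' : Fin (M'.len + 1)) (u' v' : List ℕ), List.range (M'.len + 1) = u' ++ (x' : ℕ) :: v' ∧
      efType k (u.map (markedLetter N M s)) = efType k (u'.map (markedLetter N M' s')) ∧
      markedLetter N M s x = markedLetter N M' s' x' ∧
      efType k (v.map (markedLetter N M s)) = efType k (v'.map (markedLetter N M' s')) := by
  have h_split : markedWord N M s = u.map (markedLetter N M s) ++ markedLetter N M s x ::
      v.map (markedLetter N M s) := by rw [markedWord, hx, List.map_append, List.map_cons]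
  obtain ⟨_, _, h_split', hu, hv⟩ := (efType_succ_eq_iff.1 h).1 _ _ _ h_split
  obtain ⟨u', _, hx', rfl, h_cons⟩ := List.map_eq_append_iff.1 h_split'
  obtain ⟨x', v', rfl, h_letter, rfl⟩ := List.map_eq_cons_iff.1 h_cons
  exact ⟨⟨x', List.mem_range.1 (hx' ▸ by simp)⟩, u', v', hx', hu, h_letter.symm, hv⟩

theorem markedWord_update [DecidableEq V] {j : V} {x : Fin (M.len + 1)} {u v : List ℕ}
    (hx : List.range (M.len + 1) = u ++ (x : ℕ) :: v) :
    markedWord N M (update s j x) = (u.map (markedLetter N M s)).map (setMark j False) ++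
      setMark j True (markedLetter N M s x) ::
        (v.map (markedLetter N M s)).map (setMark j False) := by
  have letter_update (t : ℕ) :
      markedLetter N M (update s j x) t = setMark j (x = t) (markedLetter N M s t) := by
    refine Prod.ext rfl (funext fun i ↦ ?_)
    by_cases hi : i = j
    · subst hi
      simp [markedLetter, setMark]
    · simp [markedLetter, setMark, hi]
  have letter_update_of_mem {l : List ℕ} (hl : ↑x ∉ l) : l.map (markedLetter N M (update s j x)) =
      (l.map (markedLetter N M s)).map (setMark j False) := by
    rw [List.map_map]
    refine List.map_congr_left fun t ht ↦ ?_
    rw [letter_update, eq_false (ne_of_mem_of_not_mem ht hl).symm, comp_apply]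
  obtain ⟨-, hv, hu⟩ := List.nodup_append.1 (hx ▸ List.nodup_range (n := M.len + 1))
  rw [markedWord, hx, List.map_append, List.map_cons, letter_update, eq_self,
    letter_update_of_mem fun h ↦ hu _ h _ (by simp) rfl, letter_update_of_mem (by simp_all)]

theorem exists_efType_markedWord_update_eq [DecidableEq V]
    (h : efType (k + 1) (markedWord N M s) = efType (k + 1) (markedWord N M' s'))
    (j : V) (x : Fin (M.len + 1)) : ∃ x' : Fin (M'.len + 1),
      efType k (markedWord N M (update s j x)) = efType k (markedWord N M' (update s' j x')) := by
  obtain ⟨u, v, hx⟩ := List.append_of_mem (List.mem_range.2 x.2)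
  obtain ⟨x', u', v', hx', hu, h_letter, hv⟩ := exists_of_efType_markedWord_succ_eq h x hx
  refine ⟨x', ?_⟩
  rw [markedWord_update hx, markedWord_update hx', h_letter]
  exact efType_append (efType_map _ hu) (efType_cons (efType_map _ hv))

end MarkedWord

section Determined

variable {V : Type*} {R R' : ∀ M : TModel, (V → Fin (M.len + 1)) → Prop}

/-- A property of assignments in finite temporal models is determined if it depends only on the type
of the marked word, for some rank and some number of propositional variables. The condition is
symmetric in the two models, so that one implication suffices. -/
def Determined (R : ∀ M : TModel, (V → Fin (M.len + 1)) → Prop) : Prop :=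
  ∃ N k, ∀ M M' s s',
    efType k (markedWord N M s) = efType k (markedWord N M' s') → R M s → R M' s'

theorem determined_const (p : Prop) : Determined fun _ (_ : V → _) ↦ p :=
  ⟨0, 0, fun _ _ _ _ _ ↦ id⟩

theorem determined_eq (i j : V) : Determined fun _ s ↦ s i = s j :=
  ⟨0, 1, fun _ _ _ _ h hij ↦ by
    have h_letter := markedLetter_eq_of_efType_one_eq h j
    exact Fin.ext <| (coe_eq_iff_of_markedLetter_eq i h_letter).1 (congrArg _ hij)⟩

theorem determined_valuation (p : ℕ) (i : V) : Determined fun M s ↦ M.V p (s i) :=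
  ⟨p + 1, 1, fun _ _ _ _ h ↦ (valuation_iff_of_markedLetter_eq p.lt_succ_self <|
    markedLetter_eq_of_efType_one_eq h i).1⟩

theorem determined_lt (i j : V) : Determined fun _ s ↦ s i < s j := by
  refine ⟨0, 2, fun M M' s s' h hij ↦ ?_⟩
  obtain ⟨u, v, hj⟩ := List.append_of_mem (List.mem_range.2 (s j).2)
  obtain ⟨x', u', v', hx', hu, h_letter, -⟩ := exists_of_efType_markedWord_succ_eq h _ hj
  obtain ⟨t, ht, h_letter'⟩ := List.mem_map.1 <| mem_of_efType_one_eq hu <|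
    List.mem_map_of_mem ((mem_iff_lt_of_range_eq_append_cons hj).2 hij)
  rw [mem_iff_lt_of_range_eq_append_cons hx'] at ht
  rwa [Fin.lt_def, (coe_eq_iff_of_markedLetter_eq i h_letter'.symm).1 rfl,
    (coe_eq_iff_of_markedLetter_eq j h_letter).1 rfl]

theorem Determined.imp (h : Determined R) (h' : Determined R') :
    Determined fun M s ↦ R M s → R' M s := by
  obtain ⟨N, k, h⟩ := h
  obtain ⟨N', k', h'⟩ := h'
  refine ⟨max N N', max k k', fun M M' s s' e himp hs' ↦ ?_⟩
  have eN := efType_markedWord_eq_of_le (le_max_left _ _) (le_max_left _ _) e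
  have eN' := efType_markedWord_eq_of_le (le_max_right _ _) (le_max_right _ _) e
  exact h' _ _ _ _ eN' (himp (h _ _ _ _ eN.symm hs'))

theorem Determined.forall [DecidableEq V] (h : Determined R) (j : V) :
    Determined fun M s ↦ ∀ x, R M (update s j x) := by
  obtain ⟨N, k, h⟩ := h
  refine ⟨N, k + 1, fun M M' s s' e hs x' ↦ ?_⟩
  obtain ⟨x, hx⟩ := exists_efType_markedWord_update_eq e.symm j x'
  exact h _ _ _ _ hx.symm (hs x)

theorem exists_realize_term_eq {α : Type*} {n : ℕ} (t : linLang.Term (α ⊕ Fin n)) :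
    ∃ i : α ⊕ ℕ, ∀ (M : TModel) (s : α ⊕ ℕ → Fin (M.len + 1)),
      letI := M.toStructure
      t.realize (Sum.elim (s ∘ .inl) fun i : Fin n ↦ s (.inr i)) = s i := by
  obtain (i | i) | ⟨f, _⟩ := t
  exacts [⟨.inl i, fun _ _ ↦ rfl⟩, ⟨.inr i, fun _ _ ↦ rfl⟩, f.elim]

-- The variable bound at depth `n` is represented by `.inr n`.
theorem determined_realize {α : Type*} {n : ℕ} (φ : linLang.BoundedFormula α n) :
    Determined fun M (s : α ⊕ ℕ → Fin (M.len + 1)) ↦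
      letI := M.toStructure
      φ.Realize (s ∘ .inl) fun i ↦ s (.inr i) := by
  classical
  induction φ with
  | falsum => exact determined_const False
  | equal t₁ t₂ =>
    obtain ⟨i, hi⟩ := exists_realize_term_eq t₁
    obtain ⟨j, hj⟩ := exists_realize_term_eq t₂
    simpa only [Language.BoundedFormula.Realize, hi, hj] using determined_eq i j
  | @rel _ l r ts =>
    choose i hi using fun m ↦ exists_realize_term_eq (ts m)
    simp only [Language.BoundedFormula.Realize, hi]
    match l, r with
    | 1, p => exact determined_valuation p (i 0)
    | 2, _ => exact determined_lt (i 0) (i 1)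
  | imp _ _ ih ih' => exact ih.imp ih'
  | @all n φ ih =>
    have snoc_eq {M : TModel} (s : α ⊕ ℕ → Fin (M.len + 1)) (x : Fin (M.len + 1)) :
        (Fin.snoc (fun i : Fin n ↦ s (.inr i)) x : Fin (n + 1) → Fin (M.len + 1)) =
          fun i : Fin (n + 1) ↦ update s (.inr n) x (.inr i) := by
      funext i
      cases i using Fin.lastCases <;> simp [update, Nat.ne_of_lt]
    have update_comp_inl {M : TModel} (s : α ⊕ ℕ → Fin (M.len + 1)) (x : Fin (M.len + 1)) :
        update s (.inr n) x ∘ .inl = s ∘ .inl :=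
      update_comp_eq_of_notMem_range _ _ (by simp)
    simpa only [Language.BoundedFormula.realize_all, snoc_eq, update_comp_inl]
      using ih.forall (.inr n)

end Determined

theorem markedWord_const_zero {V : Type*} {N : ℕ} {M : TModel} :
    markedWord N M (fun _ : V ↦ 0) =
      (letter N M 0, fun _ ↦ True) :: (word N M 1).map (·, fun _ ↦ False) := by
  have later_letter {t : ℕ} (ht : t ∈ List.range' 1 M.len) :
      markedLetter N M (fun _ : V ↦ 0) t = (letter N M t, fun _ ↦ False) := by
    simp [markedLetter, (Nat.one_le_iff_ne_zero.1 (List.left_le_of_mem_range' ht)).symm]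
  rw [markedWord, List.range_eq_range', List.range'_succ, List.map_cons,
    List.map_congr_left fun t ↦ later_letter, word, List.map_map]
  simp [markedLetter, comp_def]

theorem exists_realizeAt_zero_of_eq (θ : linLang.Formula (Fin 1)) : ∃ N k, ∀ M M' : TModel,
    letter N M 0 = letter N M' 0 → efType k (word N M 1) = efType k (word N M' 1) →
      M.realizeAt θ 0 → M'.realizeAt θ 0 := by
  obtain ⟨N, k, h⟩ := determined_realize θ
  have realizeAt_zero_iff (M : TModel) : M.realizeAt θ 0 ↔
      (letI := M.toStructure
      Language.BoundedFormula.Realize θ (fun _ ↦ 0) fun _ : Fin 0 ↦ (0 : Fin (M.len + 1))) :=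
    letI := M.toStructure
    .of_eq <| congrArg (Language.BoundedFormula.Realize θ fun _ ↦ 0) (Subsingleton.elim _ _)
  refine ⟨N, k, fun M M' h_letter h_type hM ↦ ?_⟩
  rw [realizeAt_zero_iff] at hM ⊢
  refine h M M' (fun _ ↦ 0) (fun _ ↦ 0) ?_ hM
  rw [markedWord_const_zero, markedWord_const_zero, h_letter]
  exact efType_cons (efType_map _ h_type)

end Kamp

/-- Kamp's theorem over finite timelines. -/
theorem kamp (θ : linLang.Formula (Fin 1)) :
    ∃ φ : LTL, ∀ M : TModel, M.realizeAt θ 0 ↔ LTL.sat M 0 φ := by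
  obtain ⟨N, k, realizeAt_of_eq⟩ := Kamp.exists_realizeAt_zero_of_eq θ
  obtain ⟨φ, hφ⟩ := (Kamp.definable_cons_efType_mem
    ((fun M ↦ (Kamp.letter N M 0, Kamp.efType k (Kamp.word N M 1))) ''
      {M | M.realizeAt θ 0})).exists_sat_iff
  refine ⟨φ, fun M ↦ ?_⟩
  rw [hφ M 0 M.len.zero_le, Kamp.word_of_le M.len.zero_le]
  constructor
  · exact fun hM ↦ ⟨_, _, rfl, M, hM, rfl⟩
  · rintro ⟨_, _, ⟨⟩, M', hM', h_eq⟩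
    exact realizeAt_of_eq M' M (congrArg Prod.fst h_eq) (congrArg Prod.snd h_eq) hM'
end
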